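/- arXiv:1805.07045 — 2 statements merged into one kernel-verified Lean document; each statement's English description precedes it below -/
import Mathlib

section
/- Let 𝒜_N be the smallest unital subalgebra of the algebra of N×N random matrices that contains every matrix A_{N,ℓ}^{(k)} (ℓ ∈ {1,…,L}, k ∈ K) and is stable under the diagonal projection Δ. Then ℱ_N = 𝒜_N, and consequently 𝒞_N = Δ(𝒜_N). -/
open MeasureTheory ProbabilityTheory Filter Matrix Asymptotics
open scoped BigOperators ENNReal
open scoped Classical

noncomputable section

/-- The diagonal projection `Δ` on `N × N` complex matrices. -/
def dproj {N : ℕ} (A : Matrix (Fin N) (Fin N) ℂ) : Matrix (Fin N) (Fin N) ℂ :=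
  Matrix.of fun i j => if i = j then A i j else 0

/-- The operator norm of a matrix acting on `ℓ²({1,…,N})`. -/
def matOpNorm {N : ℕ} (A : Matrix (Fin N) (Fin N) ℂ) : ℝ :=
  ‖Matrix.toEuclideanCLM (𝕜 := ℂ) A‖

/-! ### Multigraph combinatorics -/

section Graph

variable {V E : Type} (src tgt : E → V)

/-- Adjacency through an edge avoiding a forbidden set `F` of edges
(direction is ignored). -/
def adjOn (F : Set E) (a b : V) : Prop :=
  ∃ e, e ∉ F ∧ ((src e = a ∧ tgt e = b) ∨ (src e = b ∧ tgt e = a))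

/-- Reachability in the graph, using only edges outside `F`. -/
def reachOn (F : Set E) : V → V → Prop :=
  Relation.ReflTransGen (adjOn src tgt F)

lemma adjOn_symm (F : Set E) : Symmetric (adjOn src tgt F) := by
  rintro a b ⟨e, he, h⟩
  exact ⟨e, he, h.symm⟩

/-- The setoid of connectivity using edges outside `F`. -/
def connSetoid (F : Set E) : Setoid V :=
  ⟨reachOn src tgt F,
    ⟨fun _ => Relation.ReflTransGen.refl,
     fun h => (@Relation.ReflTransGen.symmetric _ _ ⟨fun _ _ h' => adjOn_symm src tgt F h'⟩).symm _ _ h,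
     fun h h' => Relation.ReflTransGen.trans h h'⟩⟩

/-- Number of connected components of the graph with the edges in `F` deleted. -/
def ncompAvoiding (F : Set E) : ℕ :=
  Nat.card (Quotient (connSetoid src tgt F))

/-- Number of connected components. -/
def ncomp : ℕ := ncompAvoiding src tgt ∅

/-- The graph is connected. -/
def IsConnectedGraph : Prop := ∀ a b : V, reachOn src tgt ∅ a b

/-- A cut edge (bridge): deleting it disconnects its endpoints. -/
def IsCutEdge (e : E) : Prop := ¬ reachOn src tgt {e} (src e) (tgt e)

/-- The set of cut edges. -/
def cutEdges : Set E := {e | IsCutEdge src tgt e}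

/-- The setoid whose classes are the two-edge connected components
(connected components after deleting all cut edges). -/
def teccSetoid : Setoid V := connSetoid src tgt (cutEdges src tgt)

/-- Degree, in the forest of two-edge connected components, of a
two-edge connected component: the number of cut edges incident to it. -/
def teccDeg (c : Quotient (teccSetoid src tgt)) : ℕ :=
  Nat.card {e : E // IsCutEdge src tgt e ∧
    (Quotient.mk (teccSetoid src tgt) (src e) = c ∨
      Quotient.mk (teccSetoid src tgt) (tgt e) = c)}

/-- `𝔣(G)`: the number of leaves of the forest of two-edge connected components,
single-vertex trees of the forest counting twice. -/
def frak : ℕ :=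
  Nat.card {c : Quotient (teccSetoid src tgt) // teccDeg src tgt c = 1} +
    2 * Nat.card {c : Quotient (teccSetoid src tgt) // teccDeg src tgt c = 0}

end Graph

/-! ### Graph monomials -/

/-- A graph monomial: a finite directed multigraph with two roots and edges
labelled by a family index in `Fin L` and an index in `K`.  (Connectedness is
required separately via `IsConnectedGraph`.) -/
structure GraphMonomial (L : ℕ) (K : Type) where
  V : Type
  E : Type
  fintV : Fintype V
  fintE : Fintype E
  src : E → V
  tgt : E → V
  vin : V
  vout : V
  labL : E → Fin L
  labK : E → K

attribute [instance] GraphMonomial.fintV GraphMonomial.fintE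

namespace GraphMonomial

variable {L : ℕ} {K : Type} (g : GraphMonomial L K)

/-- Evaluation of a graph monomial in a collection of matrices. -/
def eval {N : ℕ} (A : Fin L → K → Matrix (Fin N) (Fin N) ℂ) :
    Matrix (Fin N) (Fin N) ℂ :=
  Matrix.of fun i j => ∑ φ : g.V → Fin N,
    if φ g.vin = j ∧ φ g.vout = i then
      ∏ e : g.E, A (g.labL e) (g.labK e) (φ (g.tgt e)) (φ (g.src e))
    else 0

/-- The starting vertex of a step `(e, b)`: `e` traversed forward if `b = true`,
backward otherwise. -/
def stepSrc (s : g.E × Bool) : g.V := if s.2 then g.src s.1 else g.tgt s.1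

/-- The ending vertex of a step. -/
def stepTgt (s : g.E × Bool) : g.V := if s.2 then g.tgt s.1 else g.src s.1

/-- A simple cycle of the underlying undirected multigraph: a nonempty cyclic
sequence of steps with pairwise distinct edges and pairwise distinct vertices. -/
def IsSimpleCycle (c : List (g.E × Bool)) : Prop :=
  ∃ h : c ≠ [],
    (∀ i : Fin c.length,
      g.stepTgt (c.get i) =
        g.stepSrc (c.get ⟨((i : ℕ) + 1) % c.length,
          Nat.mod_lt _ (List.length_pos_iff.mpr h)⟩)) ∧
    (c.map Prod.fst).Nodup ∧ (c.map g.stepSrc).Nodup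

/-- A cycle is directed when it traverses all its edges consistently with
their orientations (one way or the other). -/
def IsDirectedCycleList (c : List (g.E × Bool)) : Prop :=
  (∀ s ∈ c, s.2 = true) ∨ (∀ s ∈ c, s.2 = false)

/-- `S` is the edge set of some simple cycle. -/
def IsCycleEdgeSet (S : Finset g.E) : Prop :=
  ∃ c, g.IsSimpleCycle c ∧ (c.map Prod.fst).toFinset = S

/-- The underlying graph is an oriented cactus: it is connected, every simple
cycle is directed, and every edge belongs to exactly one simple cycle. -/
def IsOrientedCactus : Prop :=
  IsConnectedGraph g.src g.tgt ∧
  (∀ c, g.IsSimpleCycle c → g.IsDirectedCycleList c) ∧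
  (∀ e : g.E, ∃! S : Finset g.E, g.IsCycleEdgeSet S ∧ e ∈ S)

/-- A cactus-type monomial: an oriented cactus whose input and output coincide. -/
def IsCactusType : Prop := g.vin = g.vout ∧ g.IsOrientedCactus

/-- A member of `ℱ`: a directed simple path (oriented from the input, at the far
right, to the output, at the far left) with oriented cacti attached to the
vertices of the path (the root of each cactus being a path vertex). -/
def IsPathCactusType : Prop :=
  IsConnectedGraph g.src g.tgt ∧
  ∃ (d : ℕ) (v : Fin (d + 1) → g.V) (f : Fin d → g.E),
    Function.Injective v ∧ Function.Injective f ∧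
    (∀ j : Fin d, g.src (f j) = v j.succ ∧ g.tgt (f j) = v j.castSucc) ∧
    g.vin = v (Fin.last d) ∧ g.vout = v 0 ∧
    (∀ c, g.IsSimpleCycle c → g.IsDirectedCycleList c ∧ ∀ s ∈ c, s.1 ∉ Set.range f) ∧
    (∀ e : g.E, e ∉ Set.range f →
      ∃! S : Finset g.E, g.IsCycleEdgeSet S ∧ e ∈ S) ∧
    (∀ w : g.V, ∃! j : Fin (d + 1), reachOn g.src g.tgt (Set.range f) w (v j))

end GraphMonomial
/-! ### Random matrices, expectations, test graphs -/

/-- The entries of the random matrix `X` are measurable. -/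
def EntriesMeasurable {N : ℕ} {Ω : Type} [MeasurableSpace Ω]
    (X : Ω → Matrix (Fin N) (Fin N) ℂ) : Prop :=
  ∀ i j, Measurable fun ω => X ω i j

/-- The entries of the random matrix `X` are essentially bounded. -/
def EntriesBounded {N : ℕ} {Ω : Type} [MeasurableSpace Ω] (μ : Measure Ω)
    (X : Ω → Matrix (Fin N) (Fin N) ℂ) : Prop :=
  ∃ C : ℝ, ∀ᵐ ω ∂μ, ∀ i j, ‖X ω i j‖ ≤ C

/-- The σ-algebra generated by the entries of the matrices of a family. -/
def famSigma {N : ℕ} {Ω K : Type} [MeasurableSpace Ω]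
    (A : K → Ω → Matrix (Fin N) (Fin N) ℂ) : MeasurableSpace Ω :=
  ⨆ k : K, ⨆ i : Fin N, ⨆ j : Fin N,
    MeasurableSpace.comap (fun ω => A k ω i j) inferInstance

/-- Permutation invariance of a family of `N × N` random matrices. -/
def PermInvariant {N : ℕ} {Ω K : Type} [MeasurableSpace Ω] (μ : Measure Ω)
    (A : K → Ω → Matrix (Fin N) (Fin N) ℂ) : Prop :=
  ∀ σ : Equiv.Perm (Fin N),
    Measure.map (fun ω => fun (k : K) (i j : Fin N) => A k ω (σ i) (σ j)) μ =
      Measure.map (fun ω => fun (k : K) (i j : Fin N) => A k ω i j) μ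

/-- A test graph with matrix-valued edge labels. -/
structure TestGraph (N : ℕ) (Ω : Type) where
  V : Type
  E : Type
  fintV : Fintype V
  fintE : Fintype E
  src : E → V
  tgt : E → V
  lab : E → Ω → Matrix (Fin N) (Fin N) ℂ

attribute [instance] TestGraph.fintV TestGraph.fintE

namespace TestGraph

variable {N : ℕ} {Ω : Type} [MeasurableSpace Ω]

/-- Number of connected components `c(T)` of a test graph. -/
def ncc (T : TestGraph N Ω) : ℕ := ncomp T.src T.tgt

/-- The (unnormalized) trace observable of a test graph. -/
def tauInner (T : TestGraph N Ω) (ω : Ω) : ℂ :=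
  ∑ φ : T.V → Fin N, ∏ e : T.E, T.lab e ω (φ (T.tgt e)) (φ (T.src e))

/-- The (unnormalized) injective trace observable of a test graph. -/
def tau0Inner (T : TestGraph N Ω) (ω : Ω) : ℂ :=
  ∑ φ : T.V → Fin N,
    if Function.Injective φ then ∏ e : T.E, T.lab e ω (φ (T.tgt e)) (φ (T.src e)) else 0

/-- `τ_N[T]`. -/
def tau (T : TestGraph N Ω) (μ : Measure Ω) : ℂ :=
  ((N : ℂ) ^ T.ncc)⁻¹ * ∫ ω, T.tauInner ω ∂μ

/-- `τ⁰_N[T]`. -/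
def tau0 (T : TestGraph N Ω) (μ : Measure Ω) : ℂ :=
  ((N : ℂ) ^ T.ncc)⁻¹ * ∫ ω, T.tau0Inner ω ∂μ

/-- The quotient test graph `T^π` associated with a partition `π` of the
vertices of `T`. -/
def quot (T : TestGraph N Ω) (π : Setoid T.V) : TestGraph N Ω where
  V := Quotient π
  E := T.E
  fintV := @Quotient.fintype _ T.fintV π fun _ _ => Classical.propDecidable _
  fintE := T.fintE
  src := fun e => Quotient.mk π (T.src e)
  tgt := fun e => Quotient.mk π (T.tgt e)
  lab := T.lab

end TestGraph

/-- Monomial `D₀ X_{k(1)} D₁ ⋯ X_{k(d)} D_d` evaluated in a family of matrices: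
the coefficients are given as an arbitrary function `D : ℕ → Matrix`. -/
def monomialEval {K : Type} {N : ℕ} (A : K → Matrix (Fin N) (Fin N) ℂ)
    (dd : ℕ) (kk : ℕ → K) (D : ℕ → Matrix (Fin N) (Fin N) ℂ) :
    Matrix (Fin N) (Fin N) ℂ :=
  D 0 * (List.ofFn fun j : Fin dd => A (kk ((j : ℕ) + 1)) * D ((j : ℕ) + 1)).prod

/-- The centered product `(M₁ - ΔM₁)(M₂ - ΔM₂)⋯(Mₙ - ΔMₙ)`. -/
def centeredProd {N n : ℕ} (M : Fin n → Matrix (Fin N) (Fin N) ℂ) :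
    Matrix (Fin N) (Fin N) ℂ :=
  (List.ofFn fun i : Fin n => M i - dproj (M i)).prod

/-- Mutual independence of the families `A 1, …, A L` of random matrices. -/
def IndepFamilies {Ω K : Type} {L : ℕ} [MeasurableSpace Ω] (μ : Measure Ω)
    (A : (N : ℕ) → Fin L → K → Ω → Matrix (Fin N) (Fin N) ℂ) : Prop :=
  ∀ N : ℕ, ProbabilityTheory.iIndep (fun ℓ : Fin L => famSigma (A N ℓ)) μ

/-- Uniform boundedness, in operator norm, of families of random matrices. -/
def UnifOpNormBound {Ω K : Type} {L : ℕ} [MeasurableSpace Ω] (μ : Measure Ω)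
    (A : (N : ℕ) → Fin L → K → Ω → Matrix (Fin N) (Fin N) ℂ) : Prop :=
  ∃ C : ℝ, ∀ (N : ℕ) (ℓ : Fin L) (k : K), ∀ᵐ ω ∂μ, matOpNorm (A N ℓ k ω) ≤ C

/-- The growth bound (MS) for the family `A · ℓ`:
for all graph monomials `g₁, …, gₘ` labelled in the single family `ℓ` and having
equal input and output, `E[∏ᵢ Tr gᵢ(A_N)] = O(N^{Σᵢ 𝔣(gᵢ)/2})` as `N → ∞`. -/
def MSBound {Ω K : Type} {L : ℕ} [MeasurableSpace Ω] (μ : Measure Ω)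
    (A : (N : ℕ) → Fin L → K → Ω → Matrix (Fin N) (Fin N) ℂ) (ℓ : Fin L) : Prop :=
  ∀ (m : ℕ), 1 ≤ m → ∀ gs : Fin m → GraphMonomial L K,
    (∀ i : Fin m, IsConnectedGraph (gs i).src (gs i).tgt ∧
      (∀ e, (gs i).labL e = ℓ) ∧ (gs i).vin = (gs i).vout) →
    (fun N : ℕ => ∫ ω, ∏ i : Fin m,
        Matrix.trace ((gs i).eval fun ℓ' k => A N ℓ' k ω) ∂μ)
      =O[atTop] fun N : ℕ => (N : ℝ) ^ ((∑ i : Fin m, (frak (gs i).src (gs i).tgt : ℝ)) / 2)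

/-!
The evaluation of a graph monomial is the graph sum of its closure, the graph with an additional
edge from `vout` to `vin`, read as a linear form in the label of that edge. A monomial is a
path-cactus exactly when its closure is an oriented cactus, and a connected graph is an oriented
cactus exactly when its rational circulations are closed under pointwise multiplication and contain
the constant function `1`. In this algebraic form the condition survives contractions, and a
dimension count provides a loop or a vertex with one incoming and one outgoing edge. Two edges can
then be merged into one carrying a product or a diagonal part of labels, so by induction the graph
sum is, as a function of any one label, the trace against an element of `𝒜_N`; this is the
inclusion `ℱ_N ⊆ 𝒜_N`. Conversely, the one-vertex graph, single edges, concatenation and the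
identification of the two roots realise `1`, the generators, products and `Δ` inside `ℱ_N`.
-/

/-! ### Chains and circulations -/

section Chains

variable {V F : Type} {src tgt : F → V}

/-- The vertex `v` as a `0`-chain, encoded as a functional on vertex functions. -/
abbrev vertexEval (v : V) : Module.Dual ℚ (V → ℚ) :=
  LinearMap.proj v

lemma vertexEval_injective : Function.Injective (vertexEval : V → Module.Dual ℚ (V → ℚ)) := by
  intro a b h
  simpa [Pi.single_apply] using LinearMap.congr_fun h (Pi.single b 1)

lemma isConnectedGraph_iff_forall_invariant :
    IsConnectedGraph src tgt ↔
      ∀ p : V → Prop, (∀ e, p (src e) ↔ p (tgt e)) → ∀ a b, p a → p b := by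
  constructor
  · intro h p hp a b ha
    induction h a b with
    | refl => exact ha
    | tail _ hbc ih =>
      obtain ⟨e, -, ⟨rfl, rfl⟩ | ⟨rfl, rfl⟩⟩ := hbc
      · exact (hp e).1 ih
      · exact (hp e).2 ih
  · intro h a b
    refine h (reachOn src tgt ∅ a) (fun e => ⟨fun he => ?_, fun he => ?_⟩) a b .refl
    · exact he.tail ⟨e, Set.notMem_empty e, .inl ⟨rfl, rfl⟩⟩
    · exact he.tail ⟨e, Set.notMem_empty e, .inr ⟨rfl, rfl⟩⟩

variable [Fintype F]

/-- The boundary map from `1`-chains to `0`-chains of a directed multigraph. A `1`-chain from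
`a` to `b` is a `y` with `boundary src tgt y = vertexEval b - vertexEval a`. -/
def boundary (src tgt : F → V) : (F → ℚ) →ₗ[ℚ] Module.Dual ℚ (V → ℚ) :=
  Fintype.linearCombination ℚ fun e => vertexEval (tgt e) - vertexEval (src e)

/-- The circulations of a directed multigraph: the edge weights conserved at every vertex. -/
def circulations (src tgt : F → V) : Submodule ℚ (F → ℚ) :=
  LinearMap.ker (boundary src tgt)

lemma boundary_apply (y : F → ℚ) (h : V → ℚ) :
    boundary src tgt y h = ∑ e, y e * (h (tgt e) - h (src e)) := by
  simp [boundary, Fintype.linearCombination_apply]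

lemma boundary_single (e : F) (c : ℚ) :
    boundary src tgt (Pi.single e c) = c • (vertexEval (tgt e) - vertexEval (src e)) :=
  Fintype.linearCombination_apply_single ..

lemma mem_circulations {z : F → ℚ} : z ∈ circulations src tgt ↔ boundary src tgt z = 0 :=
  LinearMap.mem_ker

lemma src_eq_tgt_of_single_mem_circulations {e : F}
    (he : Pi.single e 1 ∈ circulations src tgt) : src e = tgt e := by
  rw [mem_circulations, boundary_single, one_smul, sub_eq_zero] at he
  exact (vertexEval_injective he).symm

lemma boundary_eq_sum_of_support_subset_range {ι : Type*} [Fintype ι] {f : ι → F}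
    (hf : Function.Injective f) {y : F → ℚ} (hy : ∀ e ∉ Set.range f, y e = 0) :
    boundary src tgt y =
      ∑ i, y (f i) • (vertexEval (tgt (f i)) - vertexEval (src (f i))) := by
  rw [boundary, Fintype.linearCombination_apply]
  symm
  refine Finset.sum_of_injOn f hf.injOn (by simp) (fun e _ he => ?_) (fun _ _ => rfl)
  rw [hy e (by simpa using he), zero_smul]

/-- Test the boundary against the indicator of the set of vertices reachable from `a`. -/
lemma reflTransGen_of_boundary_eq {a b : V} {z : F → ℚ} (hz : 0 ≤ z)
    (hab : boundary src tgt z = vertexEval b - vertexEval a) :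
    Relation.ReflTransGen (fun v w => ∃ e, src e = v ∧ tgt e = w) a b := by
  set R := {v | Relation.ReflTransGen (fun v w => ∃ e, src e = v ∧ tgt e = w) a v}
  suffices hb : b ∈ R from hb
  have hstep : ∀ e, src e ∈ R → tgt e ∈ R := fun e he => he.tail ⟨e, rfl, rfl⟩
  have hnonneg : 0 ≤ boundary src tgt z (R.indicator 1) := by
    rw [boundary_apply]
    refine Finset.sum_nonneg fun e _ => mul_nonneg (hz e) ?_
    by_cases he : src e ∈ R
    · simp [he, hstep e he]
    · simpa [he] using Set.indicator_nonneg (f := (1 : V → ℚ)) (fun _ _ => zero_le_one) (tgt e)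
  by_contra hb
  have ha : a ∈ R := Relation.ReflTransGen.refl
  rw [hab] at hnonneg
  norm_num [ha, hb] at hnonneg

lemma exists_chain_of_reachOn {P : Set F} {a b : V} (h : reachOn src tgt P a b) :
    ∃ y : F → ℚ, (∀ e ∈ P, y e = 0) ∧
      boundary src tgt y = vertexEval b - vertexEval a := by
  induction h with
  | refl => exact ⟨0, fun _ _ => rfl, by simp⟩
  | tail _ hbc ih =>
    obtain ⟨y, hyP, hy⟩ := ih
    obtain ⟨e, he, ⟨rfl, rfl⟩ | ⟨rfl, rfl⟩⟩ := hbc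
    · refine ⟨y + Pi.single e 1, fun x hx => ?_, ?_⟩
      · simp [hyP x hx, ne_of_mem_of_not_mem hx he]
      · rw [map_add, hy, boundary_single, one_smul]
        abel
    · refine ⟨y - Pi.single e 1, fun x hx => ?_, ?_⟩
      · simp [hyP x hx, ne_of_mem_of_not_mem hx he]
      · rw [map_sub, hy, boundary_single, one_smul]
        abel

lemma eq_of_reachOn_of_reachOn_compl {P : Set F} {a b : V}
    (hP : ∀ z ∈ circulations src tgt, ∀ e ∈ P, z e = 0)
    (h : reachOn src tgt P a b) (h' : reachOn src tgt Pᶜ a b) : a = b := by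
  obtain ⟨y, hyP, hy⟩ := exists_chain_of_reachOn h
  obtain ⟨y', hyP', hy'⟩ := exists_chain_of_reachOn h'
  have hcirc : y - y' ∈ circulations src tgt := by
    rw [mem_circulations, map_sub, hy, hy', sub_self]
  have hy'0 : y' = 0 := by
    funext e
    by_cases he : e ∈ P
    · simpa [hyP e he] using hP _ hcirc e he
    · exact hyP' e he
  rw [hy'0, map_zero, eq_comm, sub_eq_zero] at hy'
  exact (vertexEval_injective hy').symm

end Chains

/-! ### Directed paths -/

section Paths

variable {V F : Type} {src tgt : F → V} {a b : V} {d : ℕ} {v : Fin (d + 1) → V} {f : Fin d → F}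

/-- A directed simple path from `a` to `b` with vertices `v` and edges `f`, both numbered
starting from the end `b`. -/
structure IsDirectedPath (src tgt : F → V) (a b : V) {d : ℕ} (v : Fin (d + 1) → V)
    (f : Fin d → F) : Prop where
  vertex_injective : Function.Injective v
  src_eq : ∀ j, src (f j) = v j.succ
  tgt_eq : ∀ j, tgt (f j) = v j.castSucc
  first_eq : v (Fin.last d) = a
  last_eq : v 0 = b

lemma exists_isDirectedPath_of_reflTransGen
    (h : Relation.ReflTransGen (fun v w => ∃ e, src e = v ∧ tgt e = w) a b) :
    ∃ (d : ℕ) (v : Fin (d + 1) → V) (f : Fin d → F), IsDirectedPath src tgt a b v f := by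
  induction h using Relation.ReflTransGen.head_induction_on with
  | refl =>
    exact ⟨0, fun _ => b, Fin.elim0, Function.injective_of_subsingleton (α := Fin 1) _, nofun,
      nofun, rfl, rfl⟩
  | head hstep _ ih =>
    obtain ⟨e, rfl, rfl⟩ := hstep
    obtain ⟨d, v, f, hp⟩ := ih
    by_cases he : src e ∈ Set.range v
    · obtain ⟨j, hj⟩ := he
      refine ⟨j, fun i => v (Fin.castLE j.isLt i), fun i => f (Fin.castLE j.is_le i),
        hp.vertex_injective.comp (Fin.castLE_injective j.isLt), fun i => ?_, fun i => ?_, ?_, ?_⟩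
      · exact hp.src_eq _
      · exact hp.tgt_eq _
      · exact hj
      · exact hp.last_eq
    · refine ⟨d + 1, Fin.snoc (α := fun _ => V) v (src e), Fin.snoc (α := fun _ => F) f e,
        Fin.snoc_injective_of_injective hp.vertex_injective he,
        fun j => ?_, fun j => ?_, by simp, ?_⟩
      · refine Fin.lastCases (by simp) (fun j => ?_) j
        rw [Fin.succ_castSucc, Fin.snoc_castSucc, Fin.snoc_castSucc, hp.src_eq]
      · refine Fin.lastCases (by simp [hp.first_eq]) (fun j => ?_) j
        simp [hp.tgt_eq]
      · rw [← Fin.castSucc_zero, Fin.snoc_castSucc, hp.last_eq]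

namespace IsDirectedPath

lemma edge_injective (hp : IsDirectedPath src tgt a b v f) : Function.Injective f := by
  refine .of_comp (f := src) ?_
  rw [show src ∘ f = v ∘ Fin.succ from funext hp.src_eq]
  exact hp.vertex_injective.comp (Fin.succ_injective d)

lemma invariant_iff (hp : IsDirectedPath src tgt a b v f) {p : V → Prop}
    (h : ∀ j, p (src (f j)) ↔ p (tgt (f j))) (i j : Fin (d + 1)) : p (v i) ↔ p (v j) := by
  suffices h0 : ∀ i, p (v i) ↔ p (v 0) from (h0 i).trans (h0 j).symm
  intro i
  induction i using Fin.induction with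
  | zero => rfl
  | succ i ih => rw [← ih, ← hp.src_eq, ← hp.tgt_eq, h]

lemma reachOn_compl (hp : IsDirectedPath src tgt a b v f) (i j : Fin (d + 1)) :
    reachOn src tgt (Set.range f)ᶜ (v i) (v j) := by
  refine (hp.invariant_iff (p := reachOn src tgt (Set.range f)ᶜ (v i)) (fun k => ?_) i j).mp .refl
  exact ⟨fun h => h.tail ⟨f k, by simp, .inl ⟨rfl, rfl⟩⟩,
    fun h => h.tail ⟨f k, by simp, .inr ⟨rfl, rfl⟩⟩⟩

lemma exists_reachOn_vertex (hp : IsDirectedPath src tgt a b v f)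
    (hconn : IsConnectedGraph src tgt) (w : V) : ∃ j, reachOn src tgt (Set.range f) w (v j) := by
  refine isConnectedGraph_iff_forall_invariant.mp hconn
    (fun w => ∃ j, reachOn src tgt (Set.range f) w (v j)) (fun e => ?_) (v 0) w ⟨0, .refl⟩
  by_cases he : e ∈ Set.range f
  · obtain ⟨j, rfl⟩ := he
    rw [hp.src_eq, hp.tgt_eq]
    exact iff_of_true ⟨_, .refl⟩ ⟨_, .refl⟩
  · exact ⟨fun ⟨j, h⟩ => ⟨j, h.head ⟨e, he, .inr ⟨rfl, rfl⟩⟩⟩,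
      fun ⟨j, h⟩ => ⟨j, h.head ⟨e, he, .inl ⟨rfl, rfl⟩⟩⟩⟩

variable [Fintype F]

lemma boundary_indicator (hp : IsDirectedPath src tgt a b v f) :
    boundary src tgt ((Set.range f).indicator 1) = vertexEval b - vertexEval a := by
  rw [boundary_eq_sum_of_support_subset_range hp.edge_injective
    fun e he => Set.indicator_of_notMem he 1]
  simp only [Set.mem_range_self, Set.indicator_of_mem, Pi.one_apply, one_smul, hp.src_eq,
    hp.tgt_eq, Finset.sum_sub_distrib]
  have hsum := (Fin.sum_univ_castSucc fun i => vertexEval (v i)).symm.trans (Fin.sum_univ_succ _)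
  rw [← hp.first_eq, ← hp.last_eq, sub_eq_sub_iff_add_eq_add, hsum]

/-- Test the boundary against the indicator of the part of the path that follows an edge. -/
lemma eq_zero_of_support (hp : IsDirectedPath src tgt a b v f) {y : F → ℚ}
    (hy : y ∈ circulations src tgt) (hsupp : ∀ e ∉ Set.range f, y e = 0) : y = 0 := by
  funext e
  by_cases he : e ∈ Set.range f
  swap
  · exact hsupp e he
  obtain ⟨j, rfl⟩ := he
  rw [mem_circulations, boundary_eq_sum_of_support_subset_range hp.edge_injective hsupp] at hy
  have hval (i : Fin (d + 1)) :
      (v '' Set.Iic j.castSucc).indicator (1 : V → ℚ) (v i) = if i ≤ j.castSucc then 1 else 0 := by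
    simp [Set.indicator_apply, hp.vertex_injective.eq_iff]
  have hcut := LinearMap.congr_fun hy ((v '' Set.Iic j.castSucc).indicator 1)
  simp only [LinearMap.sum_apply, LinearMap.smul_apply, LinearMap.sub_apply, LinearMap.proj_apply,
    hp.src_eq, hp.tgt_eq, hval, smul_eq_mul, LinearMap.zero_apply] at hcut
  rw [Finset.sum_eq_single j _ (by simp)] at hcut
  · simpa using hcut
  · intro i _ hi
    have hle : i.castSucc ≤ j.castSucc ↔ i.succ ≤ j.castSucc := by
      rw [Fin.castSucc_le_castSucc_iff, Fin.succ_le_castSucc_iff, hi.le_iff_lt]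
    simp [hle]

end IsDirectedPath

end Paths

/-! ### Counting edges and circulations -/

section Counting

lemma single_one_mem_of_separates {K F : Type*} [Field K] [Finite F] (A : Subalgebra K (F → K))
    {e : F} (hsep : ∀ e' ≠ e, ∃ z ∈ A, z e ≠ z e') : Pi.single e 1 ∈ A := by
  cases nonempty_fintype F
  choose! z hzA hze using hsep
  set w : F → F → K := fun e' => (z e' e - z e' e')⁻¹ • (z e' - algebraMap K (F → K) (z e' e'))
  have hw : ∏ e' : {e' // e' ≠ e}, w e' ∈ A := prod_mem fun e' _ =>
    A.smul_mem (sub_mem (hzA e' e'.2) (A.algebraMap_mem _)) _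
  convert hw using 1
  funext x
  rw [Finset.prod_apply]
  by_cases hx : x = e
  · subst hx
    rw [Pi.single_eq_same, Finset.prod_eq_one]
    exact fun e' _ => inv_mul_cancel₀ (sub_ne_zero.mpr (hze e' e'.2))
  · rw [Pi.single_eq_of_ne hx, Finset.prod_eq_zero (Finset.mem_univ ⟨x, hx⟩)]
    simp [w]

lemma two_mul_finrank_le_card {K F : Type*} [Field K] [Fintype F] (W : Submodule K (F → K))
    (hW : ∀ e, ∃ e' ≠ e, ∀ z ∈ W, z e = z e') : 2 * Module.finrank K W ≤ Fintype.card F := by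
  let s : Setoid F :=
    { r := fun e e' => ∀ z ∈ W, z e = z e'
      iseqv := ⟨fun _ _ _ => rfl, fun h z hz => (h z hz).symm,
        fun h h' z hz => (h z hz).trans (h' z hz)⟩ }
  have hrange : W ≤ LinearMap.range (LinearMap.funLeft K K (Quotient.mk s)) := fun z hz =>
    ⟨Quotient.lift z fun _ _ h => h z hz, rfl⟩
  have hfinrank : Module.finrank K W ≤ Fintype.card (Quotient s) := by
    refine (Submodule.finrank_mono hrange).trans ?_
    simpa using LinearMap.finrank_range_le (LinearMap.funLeft K K (Quotient.mk s))
  suffices hcard : 2 * Fintype.card (Quotient s) ≤ Fintype.card F by lia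
  by_contra! hlt
  obtain ⟨q, hq⟩ := Fintype.exists_card_fiber_lt_of_card_lt_mul (Quotient.mk s)
    (hlt.trans_eq (mul_comm _ _))
  obtain ⟨e, rfl⟩ := Quotient.exists_rep q
  obtain ⟨e', hne, he'⟩ := hW e
  have hmem' : Quotient.mk s e' = Quotient.mk s e := Quotient.sound fun z hz => (he' z hz).symm
  exact hq.not_ge (Finset.one_lt_card.mpr ⟨e, by simp, e', by simpa using hmem', hne.symm⟩)

variable {V F : Type} [Fintype F] {src tgt : F → V}

lemma card_add_one_le_finrank_circulations_add_card [Fintype V] [Nonempty V] :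
    Fintype.card F + 1 ≤ Module.finrank ℚ (circulations src tgt) + Fintype.card V := by
  have hrange : LinearMap.range (boundary src tgt) ≤
      (Submodule.span ℚ {(1 : V → ℚ)}).dualAnnihilator := by
    rintro _ ⟨y, rfl⟩
    rw [Submodule.mem_dualAnnihilator]
    intro h hh
    obtain ⟨c, rfl⟩ := Submodule.mem_span_singleton.mp hh
    simp [boundary_apply]
  have hone := finrank_span_singleton (K := ℚ) (one_ne_zero (α := V → ℚ))
  have hann := Subspace.finrank_add_finrank_dualAnnihilator_eq (Submodule.span ℚ {(1 : V → ℚ)})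
  have hrank := LinearMap.finrank_range_add_finrank_ker (boundary src tgt)
  have hmono := Submodule.finrank_mono hrange
  rw [Module.finrank_fintype_fun_eq_card] at hann hrank
  rw [circulations]
  lia

lemma card_filter_tgt_eq_card_filter_src (h1 : 1 ∈ circulations src tgt) (v : V) :
    (Finset.univ.filter fun e => tgt e = v).card =
      (Finset.univ.filter fun e => src e = v).card := by
  have h := LinearMap.congr_fun (mem_circulations.mp h1) (Pi.single v 1)
  simp only [boundary_apply, Pi.one_apply, one_mul, Pi.single_apply, Finset.sum_sub_distrib,
    Finset.sum_boole, LinearMap.zero_apply, sub_eq_zero] at h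
  exact_mod_cast h

end Counting

/-! ### Cacti in terms of circulations -/

section CactusCirculations

variable {V F : Type} [Fintype F] {src tgt : F → V}

/-- The algebraic form of being an oriented cactus: a connected graph whose
circulations form a unital subalgebra of `F → ℚ` for the pointwise product. -/
structure HasCactusCirculations (src tgt : F → V) : Prop where
  connected : IsConnectedGraph src tgt
  one_mem : 1 ∈ circulations src tgt
  mul_mem : ∀ z ∈ circulations src tgt, ∀ w ∈ circulations src tgt,
    z * w ∈ circulations src tgt

namespace HasCactusCirculations

/-- The algebra of circulations of an oriented cactus. -/
def circulationAlgebra (H : HasCactusCirculations src tgt) : Subalgebra ℚ (F → ℚ) :=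
  (circulations src tgt).toSubalgebra H.one_mem fun z w hz hw => H.mul_mem z hz w hw

lemma exists_src_eq [Nonempty F] (H : HasCactusCirculations src tgt) (v : V) :
    ∃ e, src e = v := by
  by_contra! hsrc
  have htgt : ∀ e, tgt e ≠ v := by
    have hcard := card_filter_tgt_eq_card_filter_src H.one_mem v
    simp only [hsrc, Finset.filter_false, Finset.card_empty, Finset.card_eq_zero,
      Finset.filter_eq_empty_iff, Finset.mem_univ, true_imp_iff] at hcard
    exact @hcard
  obtain ⟨e⟩ := ‹Nonempty F›
  exact hsrc e (isConnectedGraph_iff_forall_invariant.mp H.connected (· = v)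
    (fun e => iff_of_false (hsrc e) (htgt e)) v (src e) rfl)

lemma exists_ne_tgt_eq_src [Nontrivial F] (H : HasCactusCirculations src tgt) (e : F) :
    ∃ e' ≠ e, tgt e' = src e := by
  by_contra! hne
  have hsub : (Finset.univ.filter fun e' => tgt e' = src e) ⊆ {e} := fun e' he' => by
    by_contra h
    exact hne e' (by simpa using h) (by simpa using he')
  have hcard := card_filter_tgt_eq_card_filter_src H.one_mem (src e)
  have hsrc : {e} = Finset.univ.filter fun e' => src e' = src e :=
    Finset.eq_of_subset_of_card_le (by simp) (hcard.symm.trans_le (Finset.card_le_card hsub))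
  have htgt := Finset.eq_of_subset_of_card_le hsub (by rw [hcard, ← hsrc])
  have hinv : ∀ e', src e' = src e ↔ tgt e' = src e := fun e' => by
    simpa using Finset.ext_iff.mp (hsrc.symm.trans htgt.symm) e'
  obtain ⟨e', he'⟩ := exists_ne e
  have := isConnectedGraph_iff_forall_invariant.mp H.connected (· = src e) hinv _ (src e') rfl
  exact hne e' he' ((hinv e').mp this)

lemma exists_loop_or_card_lt [Fintype V] [Nonempty V] (H : HasCactusCirculations src tgt) :
    (∃ e, src e = tgt e) ∨ Fintype.card F < Fintype.card V * 2 := by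
  refine or_iff_not_imp_left.mpr fun hloop => ?_
  have hpair : ∀ e, ∃ e' ≠ e, ∀ z ∈ circulations src tgt, z e = z e' := by
    intro e
    by_contra! hsep
    exact hloop ⟨e, src_eq_tgt_of_single_mem_circulations
      (single_one_mem_of_separates H.circulationAlgebra hsep)⟩
  have hupper := two_mul_finrank_le_card _ hpair
  have hlower := card_add_one_le_finrank_circulations_add_card (src := src) (tgt := tgt)
  lia

lemma exists_loop_or_degree_two [Finite V] [Nonempty F] (H : HasCactusCirculations src tgt) :
    (∃ e, src e = tgt e) ∨
      ∃ v e₁ e₂, (∀ e, tgt e = v ↔ e = e₁) ∧ (∀ e, src e = v ↔ e = e₂) := by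
  cases nonempty_fintype V
  have : Nonempty V := ‹Nonempty F›.map src
  refine H.exists_loop_or_card_lt.imp_right fun hcard => ?_
  obtain ⟨v, hv⟩ := Fintype.exists_card_fiber_lt_of_card_lt_mul src hcard
  obtain ⟨e, he⟩ := H.exists_src_eq v
  have hpos : 0 < (Finset.univ.filter fun e => src e = v).card :=
    Finset.card_pos.mpr ⟨e, by simpa using he⟩
  have hout : (Finset.univ.filter fun e => src e = v).card = 1 := by lia
  have hin := (card_filter_tgt_eq_card_filter_src H.one_mem v).trans hout
  obtain ⟨e₁, he₁⟩ := Finset.card_eq_one.mp hin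
  obtain ⟨e₂, he₂⟩ := Finset.card_eq_one.mp hout
  exact ⟨v, e₁, e₂, by simpa [Finset.ext_iff] using he₁, by simpa [Finset.ext_iff] using he₂⟩

end HasCactusCirculations

end CactusCirculations

/-! ### Gluing vertices and contracting edges -/

section Gluing

variable {V V' : Type} {q : V → V'} {a b u v : V}

/-- The map `q` is the quotient map identifying the points `a` and `b`, with `a = b` allowed. The
universal property is used instead of a fixed quotient so that each contraction can keep its most
convenient vertex set. -/
structure IsGluing (q : V → V') (a b : V) : Prop where
  surjective : Function.Surjective q
  map_eq : q a = q b
  exists_comp_eq : ∀ {T : Type} (h : V → T), h a = h b → ∃ h' : V' → T, h' ∘ q = h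

lemma isGluing_id : IsGluing id a a :=
  ⟨Function.surjective_id, rfl, fun h _ => ⟨h, rfl⟩⟩

lemma isGluing_quot_mk : IsGluing (Quot.mk fun x y => x = a ∧ y = b) a b :=
  ⟨Quot.mk_surjective, Quot.sound ⟨rfl, rfl⟩, fun h hab =>
    ⟨Quot.lift h fun _ _ hxy => by rw [hxy.1, hxy.2, hab], rfl⟩⟩

/-- The map collapsing the vertex `v` onto the other vertex `u`. -/
def collapse (huv : u ≠ v) (w : V) : {w // w ≠ v} :=
  if hw : w = v then ⟨u, huv⟩ else ⟨w, hw⟩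

lemma collapse_self (huv : u ≠ v) : collapse huv v = ⟨u, huv⟩ :=
  dif_pos rfl

lemma collapse_of_ne (huv : u ≠ v) {w : V} (hw : w ≠ v) : collapse huv w = ⟨w, hw⟩ :=
  dif_neg hw

lemma isGluing_collapse (huv : u ≠ v) : IsGluing (collapse huv) v u where
  surjective w := ⟨w, collapse_of_ne huv w.2⟩
  map_eq := by rw [collapse_self, collapse_of_ne huv huv]
  exists_comp_eq h hvu := by
    refine ⟨fun w => h w, funext fun w => ?_⟩
    by_cases hw : w = v
    · rw [Function.comp_apply, hw, collapse_self, hvu]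
    · rw [Function.comp_apply, collapse_of_ne huv hw]

lemma IsGluing.sum_comp {n : Type} {M : Type*} [DecidableEq n] [AddCommMonoid M] [Fintype (V → n)]
    [Fintype (V' → n)] (hq : IsGluing q a b) (G : (V → n) → M) :
    ∑ φ : V' → n, G (φ ∘ q) = ∑ φ : V → n, if φ a = φ b then G φ else 0 := by
  refine Finset.sum_of_injOn (· ∘ q) hq.surjective.injective_comp_right.injOn (by simp)
    (fun φ _ hφ => if_neg fun hab => hφ ?_) fun φ _ => (if_pos (congrArg φ hq.map_eq)).symm
  simpa using hq.exists_comp_eq φ hab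

end Gluing

section Contraction

variable {V V' F F' : Type} [Fintype F] [Fintype F'] {src tgt : F → V} {q : V → V'}

lemma boundary_equiv_option (ε : Option F' ≃ F) (x : F → ℚ) (h : V → ℚ) :
    boundary src tgt x h = x (ε none) * (h (tgt (ε none)) - h (src (ε none))) +
      ∑ e, x (ε (some e)) * (h (tgt (ε (some e))) - h (src (ε (some e)))) := by
  rw [boundary_apply, ← ε.sum_comp, Fintype.sum_option]

/-- A circulation of the contraction has boundary supported at the two glued vertices, which the
contracted edge can compensate. -/
lemma mem_circulations_contract_iff (ε : Option F' ≃ F)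
    (hq : IsGluing q (src (ε none)) (tgt (ε none))) {z : F' → ℚ} :
    z ∈ circulations (fun e => q (src (ε (some e)))) (fun e => q (tgt (ε (some e)))) ↔
      ∃ x ∈ circulations src tgt, (fun e => x (ε (some e))) = z := by
  have hcontract : ∀ (x : F → ℚ) (h : V' → ℚ),
      boundary (fun e => q (src (ε (some e)))) (fun e => q (tgt (ε (some e))))
        (fun e => x (ε (some e))) h = boundary src tgt x (h ∘ q) := fun x h => by
    simp [boundary_equiv_option ε, boundary_apply, hq.map_eq]
  constructor
  · intro hz
    set y : F → ℚ := fun e => (ε.symm e).elim 0 z with hy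
    have hyz : (fun e => y (ε (some e))) = z := by simp [hy]
    have hker : LinearMap.ker (vertexEval (tgt (ε none)) - vertexEval (src (ε none))) ≤
        LinearMap.ker (boundary src tgt y) := fun h hh => by
      obtain ⟨h', rfl⟩ := hq.exists_comp_eq h (sub_eq_zero.mp hh).symm
      rw [LinearMap.mem_ker, ← hcontract, hyz, mem_circulations.mp hz, LinearMap.zero_apply]
    have hspan := mem_span_of_iInf_ker_le_ker (ι := Unit)
      (L := fun _ => vertexEval (tgt (ε none)) - vertexEval (src (ε none)))
      ((iInf_le _ ()).trans hker)
    rw [Set.range_const, Submodule.mem_span_singleton] at hspan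
    obtain ⟨c, hc⟩ := hspan
    refine ⟨y - Pi.single (ε none) c, ?_, ?_⟩
    · rw [mem_circulations, map_sub, boundary_single, hc, sub_self]
    · rw [← hyz]
      simp
  · rintro ⟨x, hx, rfl⟩
    refine mem_circulations.mpr (LinearMap.ext fun h => ?_)
    rw [hcontract, mem_circulations.mp hx, LinearMap.zero_apply, LinearMap.zero_apply]

theorem HasCactusCirculations.contract (H : HasCactusCirculations src tgt) (ε : Option F' ≃ F)
    (hq : IsGluing q (src (ε none)) (tgt (ε none))) :
    HasCactusCirculations (fun e => q (src (ε (some e)))) (fun e => q (tgt (ε (some e)))) where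
  connected := by
    refine isConnectedGraph_iff_forall_invariant.mpr fun p hp a b => ?_
    obtain ⟨a, rfl⟩ := hq.surjective a
    obtain ⟨b, rfl⟩ := hq.surjective b
    refine isConnectedGraph_iff_forall_invariant.mp H.connected (p ∘ q) (fun e => ?_) a b
    obtain ⟨_ | e, rfl⟩ := ε.surjective e
    · simp only [Function.comp_apply, hq.map_eq]
    · exact hp e
  one_mem := (mem_circulations_contract_iff ε hq).mpr ⟨1, H.one_mem, rfl⟩
  mul_mem := fun z hz w hw => by
    obtain ⟨x, hx, rfl⟩ := (mem_circulations_contract_iff ε hq).mp hz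
    obtain ⟨y, hy, rfl⟩ := (mem_circulations_contract_iff ε hq).mp hw
    exact (mem_circulations_contract_iff ε hq).mpr ⟨x * y, H.mul_mem x hx y hy, rfl⟩

lemma HasCactusCirculations.of_remove_loop (ε : Option F' ≃ F)
    (hloop : src (ε none) = tgt (ε none))
    (H : HasCactusCirculations (fun e => src (ε (some e))) (fun e => tgt (ε (some e)))) :
    HasCactusCirculations src tgt := by
  have hmem : ∀ x : F → ℚ, x ∈ circulations src tgt ↔ (fun e => x (ε (some e))) ∈
      circulations (fun e => src (ε (some e))) (fun e => tgt (ε (some e))) := fun x => by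
    simp [mem_circulations, LinearMap.ext_iff, boundary_equiv_option ε, boundary_apply, hloop]
  refine ⟨isConnectedGraph_iff_forall_invariant.mpr fun p hp => ?_, (hmem 1).mpr H.one_mem,
    fun z hz w hw => (hmem _).mpr (H.mul_mem _ ((hmem z).mp hz) _ ((hmem w).mp hw))⟩
  exact isConnectedGraph_iff_forall_invariant.mp H.connected p fun e => hp _

end Contraction

section Join

variable {V₁ V₂ V' F₁ F₂ : Type} {src₁ tgt₁ : Option F₁ → V₁} {src₂ tgt₂ : Option F₂ → V₂}
  {q : V₁ ⊕ V₂ → V'}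

/-- The sources of the edges of the join of two graphs along their edges `none`, which become the
single edge `none` running from the source of the first to the target of the second. The map `q`
identifies the two remaining endpoints. -/
def joinSrc (q : V₁ ⊕ V₂ → V') (src₁ : Option F₁ → V₁) (src₂ : Option F₂ → V₂) :
    Option (F₁ ⊕ F₂) → V' := fun o =>
  o.elim (q (Sum.inl (src₁ none)))
    fun e => q (Sum.map (fun e => src₁ (some e)) (fun e => src₂ (some e)) e)

/-- The targets of the edges of the join of two graphs along their edges `none`; see `joinSrc`. -/
def joinTgt (q : V₁ ⊕ V₂ → V') (tgt₁ : Option F₁ → V₁) (tgt₂ : Option F₂ → V₂) :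
    Option (F₁ ⊕ F₂) → V' := fun o =>
  o.elim (q (Sum.inr (tgt₂ none)))
    fun e => q (Sum.map (fun e => tgt₁ (some e)) (fun e => tgt₂ (some e)) e)

variable [Fintype F₁] [Fintype F₂]

lemma HasCactusCirculations.forall_imp_of_invariant_ne {V F : Type} [Fintype F]
    {src tgt : F → V} (H : HasCactusCirculations src tgt) {p : V → Prop} {e₀ : F}
    (hp : ∀ e ≠ e₀, p (src e) ↔ p (tgt e)) (a b : V) : p a → p b := by
  refine isConnectedGraph_iff_forall_invariant.mp H.connected p (fun e => ?_) a b
  obtain rfl | he := eq_or_ne e e₀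
  · have hflow : boundary src tgt 1 (fun w => if p w then 1 else 0) = 0 := by
      rw [mem_circulations.mp H.one_mem, LinearMap.zero_apply]
    rw [boundary_apply, Fintype.sum_eq_single e fun e he => by simp [hp e he]] at hflow
    by_cases h₁ : p (src e) <;> by_cases h₂ : p (tgt e) <;> simp_all
  · exact hp e he

lemma isConnectedGraph_join (hq : IsGluing q (Sum.inl (tgt₁ none)) (Sum.inr (src₂ none)))
    (H₁ : HasCactusCirculations src₁ tgt₁) (H₂ : HasCactusCirculations src₂ tgt₂) :
    IsConnectedGraph (joinSrc q src₁ src₂) (joinTgt q tgt₁ tgt₂) := by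
  refine isConnectedGraph_iff_forall_invariant.mpr fun p hp => ?_
  have hleft : ∀ x y, p (q (Sum.inl x)) → p (q (Sum.inl y)) :=
    H₁.forall_imp_of_invariant_ne (p := fun x => p (q (Sum.inl x))) (e₀ := none)
      (Option.forall.mpr ⟨fun h => (h rfl).elim, fun e _ => hp (some (Sum.inl e))⟩)
  have hright : ∀ x y, p (q (Sum.inr x)) → p (q (Sum.inr y)) :=
    H₂.forall_imp_of_invariant_ne (p := fun x => p (q (Sum.inr x))) (e₀ := none)
      (Option.forall.mpr ⟨fun h => (h rfl).elim, fun e _ => hp (some (Sum.inr e))⟩)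
  have hglue : p (q (Sum.inl (tgt₁ none))) ↔ p (q (Sum.inr (src₂ none))) := by rw [hq.map_eq]
  rw [hq.surjective.forall₂]
  rintro (x | x) (y | y) hx
  · exact hleft x y hx
  · exact hright _ y (hglue.mp (hleft x _ hx))
  · exact hleft _ y (hglue.mpr (hright x _ hx))
  · exact hright x y hx

lemma boundary_join (hq : IsGluing q (Sum.inl (tgt₁ none)) (Sum.inr (src₂ none)))
    (z : Option (F₁ ⊕ F₂) → ℚ) (h : V' → ℚ) :
    boundary (joinSrc q src₁ src₂) (joinTgt q tgt₁ tgt₂) z h =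
      boundary src₁ tgt₁ (fun o => z (o.map Sum.inl)) (fun x => h (q (Sum.inl x))) +
        boundary src₂ tgt₂ (fun o => z (o.map Sum.inr)) (fun x => h (q (Sum.inr x))) := by
  simp only [boundary_apply, Fintype.sum_option, Fintype.sum_sum_type, joinSrc, joinTgt,
    Option.elim_none, Option.elim_some, Option.map_none, Option.map_some, Sum.map_inl, Sum.map_inr]
  linear_combination -z none * congrArg h hq.map_eq

lemma mem_circulations_join_iff (hq : IsGluing q (Sum.inl (tgt₁ none)) (Sum.inr (src₂ none)))
    {z : Option (F₁ ⊕ F₂) → ℚ} :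
    z ∈ circulations (joinSrc q src₁ src₂) (joinTgt q tgt₁ tgt₂) ↔
      (fun o => z (o.map Sum.inl)) ∈ circulations src₁ tgt₁ ∧
        (fun o => z (o.map Sum.inr)) ∈ circulations src₂ tgt₂ := by
  simp only [mem_circulations, LinearMap.ext_iff, LinearMap.zero_apply, boundary_join hq]
  refine ⟨fun hz => ⟨fun h => ?_, fun h => ?_⟩, fun hz h => by rw [hz.1, hz.2, add_zero]⟩
  · obtain ⟨h', hh'⟩ := hq.exists_comp_eq (Sum.elim h fun _ => h (tgt₁ none)) rfl
    have hq' : ∀ x, h' (q x) = _ := congrFun hh'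
    simpa [boundary_apply, hq'] using hz h'
  · obtain ⟨h', hh'⟩ := hq.exists_comp_eq (Sum.elim (fun _ => h (src₂ none)) h) rfl
    have hq' : ∀ x, h' (q x) = _ := congrFun hh'
    simpa [boundary_apply, hq'] using hz h'

theorem HasCactusCirculations.join (hq : IsGluing q (Sum.inl (tgt₁ none)) (Sum.inr (src₂ none)))
    (H₁ : HasCactusCirculations src₁ tgt₁) (H₂ : HasCactusCirculations src₂ tgt₂) :
    HasCactusCirculations (joinSrc q src₁ src₂) (joinTgt q tgt₁ tgt₂) where
  connected := isConnectedGraph_join hq H₁ H₂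
  one_mem := (mem_circulations_join_iff hq).mpr ⟨H₁.one_mem, H₂.one_mem⟩
  mul_mem z hz w hw := by
    rw [mem_circulations_join_iff hq] at hz hw ⊢
    exact ⟨H₁.mul_mem _ hz.1 _ hw.1, H₂.mul_mem _ hz.2 _ hw.2⟩

end Join

/-! ### Graph sums of cacti -/

section GraphSum

variable {V F : Type} {n R : Type*} [Fintype V] [Fintype F] [Fintype n] [CommSemiring R]
  {src tgt : F → V}

/-- The sum over all colourings of the vertices by `n` of the product of the matrix entries picked
by the edges; it is the evaluation of a graph without roots. -/
def graphSum (src tgt : F → V) (X : F → Matrix n n R) : R :=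
  ∑ φ : V → n, ∏ e, X e (φ (tgt e)) (φ (src e))

lemma map_graphSum {R' : Type*} [CommSemiring R'] (f : R →+* R') (X : F → Matrix n n R) :
    f (graphSum src tgt X) = graphSum src tgt fun e => (X e).map f := by
  simp [graphSum]

lemma graphSum_delete_loop [DecidableEq n] {e₁ e₂ : F} (hne : e₁ ≠ e₂) (h₁ : tgt e₁ = src e₂)
    (h₂ : tgt e₂ = src e₂) (X : F → Matrix n n R) :
    graphSum src tgt X = graphSum (fun e : {e // e ≠ e₂} => src e) (fun e => tgt e)
      fun e => Function.update X e₁ (Matrix.diagonal (X e₂).diag * X e₁) e := by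
  refine Finset.sum_congr rfl fun φ _ => ?_
  rw [Fintype.prod_eq_mul_prod_subtype_ne _ e₂, Fintype.prod_eq_mul_prod_subtype_ne _ ⟨e₁, hne⟩,
    Fintype.prod_eq_mul_prod_subtype_ne _ (⟨e₁, hne⟩ : {e // e ≠ e₂}), ← mul_assoc]
  congr 1
  · simp [h₁, h₂, Matrix.diagonal_mul]
  · refine Finset.prod_congr rfl fun e _ => ?_
    exact congrArg (fun M : Matrix n n R => M _ _)
      (Function.update_of_ne (fun h => e.2 (Subtype.ext h)) _ _).symm

lemma graphSum_contract_degree_two {v : V} {e₁ e₂ : F} (hin : ∀ e, tgt e = v ↔ e = e₁)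
    (hout : ∀ e, src e = v ↔ e = e₂) (hv : tgt e₂ ≠ v) (X : F → Matrix n n R) :
    graphSum src tgt X = graphSum (fun e : {e // e ≠ e₂} => collapse hv (src e))
      (fun e => collapse hv (tgt e)) fun e => Function.update X e₁ (X e₂ * X e₁) e := by
  have hne : e₁ ≠ e₂ := fun h => hv ((hin e₂).2 h.symm)
  unfold graphSum
  rw [← (Equiv.funSplitAt v n).symm.sum_comp, Fintype.sum_prod_type_right]
  refine Finset.sum_congr (by ext; simp) fun ψ _ => ?_
  have hself : ∀ x, (Equiv.funSplitAt v n).symm (x, ψ) v = x := by simp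
  have hcollapse : ∀ x, ∀ w ≠ v, (Equiv.funSplitAt v n).symm (x, ψ) w = ψ (collapse hv w) :=
    fun x w hw => by simp [hw, collapse_of_ne]
  simp_rw [Fintype.prod_eq_mul_prod_subtype_ne _ e₂]
  rw [Fintype.prod_eq_mul_prod_subtype_ne _ (⟨e₁, hne⟩ : {e // e ≠ e₂}), Function.update_self,
    Matrix.mul_apply, Finset.sum_mul]
  refine Finset.sum_congr rfl fun x _ => ?_
  rw [Fintype.prod_eq_mul_prod_subtype_ne _ (⟨e₁, hne⟩ : {e // e ≠ e₂}), ← mul_assoc,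
    hcollapse x (tgt e₂) hv, hcollapse x (src e₁) fun h => hne ((hout e₁).1 h), (hin e₁).2 rfl,
    (hout e₂).2 rfl, hself, collapse_self, collapse_of_ne hv hv]
  congr 1
  refine Finset.prod_congr rfl fun e _ => ?_
  have he₁ : e.1.1 ≠ e₁ := fun h => e.2 (Subtype.ext h)
  rw [Function.update_of_ne he₁, hcollapse x (tgt e.1) fun h => he₁ ((hin _).1 h),
    hcollapse x (src e.1) fun h => e.1.2 ((hout _).1 h)]

variable [DecidableEq n]

/-- For labels in `S`, the graph sum as a function of the label of any one edge `e₀` is the trace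
against an element of `S`. Labellings `X'` agreeing with `X` off `e₀` vary that label. -/
def GraphSumIsTrace (S : Submonoid (Matrix n n R)) (src tgt : F → V) : Prop :=
  ∀ (e₀ : F) (X : F → Matrix n n R), (∀ e ≠ e₀, X e ∈ S) →
    ∃ M ∈ S, ∀ X' : F → Matrix n n R, (∀ e ≠ e₀, X' e = X e) →
      graphSum src tgt X' = Matrix.trace (M * X' e₀)

/-- The edge `e₂` is merged into `e₁`, which takes the label `Θ (X e₂) * X e₁`; self-adjointness of
`Θ` for the trace form recovers the case of varying the label of `e₂`. -/
lemma GraphSumIsTrace.of_merge {S : Submonoid (Matrix n n R)} {V' : Type} [Fintype V']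
    {e₁ e₂ : F} {src' tgt' : {e // e ≠ e₂} → V'} (IH : GraphSumIsTrace S src' tgt')
    (hne : e₁ ≠ e₂) (Θ : Matrix n n R → Matrix n n R) (hΘ : ∀ A ∈ S, Θ A ∈ S)
    (htrace : ∀ A B, Matrix.trace (A * Θ B) = Matrix.trace (Θ A * B))
    (hmerge : ∀ X : F → Matrix n n R, graphSum src tgt X =
      graphSum src' tgt' fun e => Function.update X e₁ (Θ (X e₂) * X e₁) e) :
    GraphSumIsTrace S src tgt := by
  intro e₀ X hX
  by_cases h₂ : e₀ = e₂
  · subst h₂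
    obtain ⟨M, hM, h⟩ := IH ⟨e₁, hne⟩ (fun e => X e) fun e _ => hX e e.2
    refine ⟨Θ (X e₁ * M), hΘ _ (mul_mem (hX e₁ hne) hM), fun X' hX' => ?_⟩
    rw [hmerge, h _ fun e he => ?_, Function.update_self, hX' e₁ hne, ← htrace, Matrix.mul_assoc,
      Matrix.trace_mul_comm (X e₁), Matrix.mul_assoc]
    rw [Function.update_of_ne fun h => he (Subtype.ext h), hX' e e.2]
  by_cases h₁ : e₀ = e₁
  · subst h₁
    obtain ⟨M, hM, h⟩ := IH ⟨e₀, hne⟩ (fun e => X e) fun e he => hX e fun h => he (Subtype.ext h)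
    refine ⟨M * Θ (X e₂), mul_mem hM (hΘ _ (hX e₂ hne.symm)), fun X' hX' => ?_⟩
    rw [hmerge, h _ fun e he => ?_, Function.update_self, hX' e₂ hne.symm, Matrix.mul_assoc]
    have he₀ : e.1 ≠ e₀ := fun h => he (Subtype.ext h)
    rw [Function.update_of_ne he₀, hX' e he₀]
  · have hmem : ∀ e ≠ e₀, Function.update X e₁ (Θ (X e₂) * X e₁) e ∈ S := fun e he => by
      by_cases he₁ : e = e₁
      · rw [he₁, Function.update_self]
        exact mul_mem (hΘ _ (hX e₂ (Ne.symm h₂))) (hX e₁ (Ne.symm h₁))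
      · rw [Function.update_of_ne he₁]
        exact hX e he
    obtain ⟨M, hM, h⟩ := IH ⟨e₀, h₂⟩ (fun e => Function.update X e₁ (Θ (X e₂) * X e₁) e)
      fun e he => hmem e fun h => he (Subtype.ext h)
    refine ⟨M, hM, fun X' hX' => ?_⟩
    rw [hmerge, h _ fun e he => ?_, Function.update_of_ne h₁]
    rw [hX' e₂ (Ne.symm h₂), hX' e₁ (Ne.symm h₁), Function.update_apply, Function.update_apply,
      hX' e fun h => he (Subtype.ext h)]

lemma HasCactusCirculations.graphSumIsTrace_of_subsingleton [Subsingleton F]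
    (H : HasCactusCirculations src tgt) (S : Submonoid (Matrix n n R)) :
    GraphSumIsTrace S src tgt := by
  intro e₀ X _
  have : Nonempty F := ⟨e₀⟩
  have hV : ∀ v, v = src e₀ := fun v => by
    obtain ⟨e, rfl⟩ := H.exists_src_eq v
    rw [Subsingleton.elim e e₀]
  let _ : Unique F := ⟨⟨e₀⟩, fun e => Subsingleton.elim e e₀⟩
  let _ : Unique V := ⟨⟨src e₀⟩, hV⟩
  refine ⟨1, S.one_mem, fun X' _ => ?_⟩
  rw [Matrix.one_mul, Matrix.trace, graphSum, ← (Equiv.funUnique V n).symm.sum_comp]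
  refine Finset.sum_congr rfl fun i _ => ?_
  rw [Fintype.prod_unique, Subsingleton.elim default e₀]
  rfl

theorem HasCactusCirculations.graphSumIsTrace (H : HasCactusCirculations src tgt)
    (S : Submonoid (Matrix n n R)) (hS : ∀ A ∈ S, Matrix.diagonal A.diag ∈ S) :
    GraphSumIsTrace S src tgt := by
  induction hF : Fintype.card F generalizing V F with
  | zero => exact fun e₀ => ((Fintype.card_eq_zero_iff.mp hF).false e₀).elim
  | succ m ih =>
    rcases subsingleton_or_nontrivial F with _ | _
    · exact H.graphSumIsTrace_of_subsingleton S
    have hcard : ∀ e₂ : F, Fintype.card {e // e ≠ e₂} = m := fun e₂ => by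
      simp [Fintype.card_subtype_compl, hF]
    by_cases hloop : ∃ e, src e = tgt e
    · obtain ⟨e₂, he₂⟩ := hloop
      obtain ⟨e₁, hne, he₁⟩ := H.exists_ne_tgt_eq_src e₂
      have H' : HasCactusCirculations (fun e : {e // e ≠ e₂} => src e) (fun e => tgt e) := by
        simpa using
          H.contract (q := id) (Equiv.optionSubtypeNe e₂) (by simpa [he₂] using isGluing_id)
      refine (ih H' (hcard e₂)).of_merge hne (fun A => Matrix.diagonal A.diag) hS (fun A B => ?_)
        (graphSum_delete_loop hne he₁ he₂.symm)
      simp [Matrix.trace, Matrix.mul_diagonal, Matrix.diagonal_mul]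
    · obtain ⟨v, e₁, e₂, hin, hout⟩ := H.exists_loop_or_degree_two.resolve_left hloop
      have hv : tgt e₂ ≠ v := fun h => hloop ⟨e₂, ((hout e₂).2 rfl).trans h.symm⟩
      have H' : HasCactusCirculations (fun e : {e // e ≠ e₂} => collapse hv (src e))
          (fun e => collapse hv (tgt e)) := by
        simpa using H.contract (q := collapse hv) (Equiv.optionSubtypeNe e₂)
          (by simpa [(hout e₂).2 rfl] using isGluing_collapse hv)
      exact (ih H' (hcard e₂)).of_merge (fun h => hv ((hin e₂).2 h.symm)) id (fun _ hA => hA)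
        (fun _ _ => rfl) (graphSum_contract_degree_two hin hout hv)

end GraphSum

/-! ### Simple cycles -/

lemma exists_first_return {α : Type*} [Finite α] (u : ℕ → α) :
    ∃ i n, 0 < n ∧ u (i + n) = u i ∧ Set.InjOn (fun k => u (i + k)) (Set.Iio n) := by
  have hrep : ∃ j, ∃ i < j, u i = u j := by
    obtain ⟨a, b, hab, h⟩ := Finite.exists_ne_map_eq_of_infinite u
    rcases hab.lt_or_gt with h' | h'
    exacts [⟨b, a, h', h⟩, ⟨a, b, h', h.symm⟩]
  obtain ⟨i, hi, hu⟩ := Nat.find_spec hrep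
  refine ⟨i, Nat.find hrep - i, by omega, by rw [Nat.add_sub_of_le hi.le, hu],
    fun a ha b hb h => ?_⟩
  rw [Set.mem_Iio] at ha hb
  by_contra hne
  rcases Nat.lt_or_gt_of_ne hne with h' | h'
  · exact Nat.find_min hrep (m := i + b) (by omega) ⟨i + a, by omega, h⟩
  · exact Nat.find_min hrep (m := i + a) (by omega) ⟨i + b, by omega, h.symm⟩

namespace GraphMonomial

variable {L : ℕ} {K : Type} {g : GraphMonomial L K}

/-- A simple cycle given by a cyclically indexed family of steps. -/
structure IsCyclicSteps {n : ℕ} [NeZero n] (s : Fin n → g.E × Bool) : Prop where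
  closed : ∀ i, g.stepTgt (s i) = g.stepSrc (s (i + 1))
  edge_injective : Function.Injective fun i => (s i).1
  vertex_injective : Function.Injective fun i => g.stepSrc (s i)

lemma isSimpleCycle_ofFn {n : ℕ} [NeZero n] {s : Fin n → g.E × Bool} :
    g.IsSimpleCycle (List.ofFn s) ↔ IsCyclicSteps s := by
  have hidx : ∀ i : Fin n, (⟨(i.1 + 1) % n, Nat.mod_lt _ (NeZero.pos n)⟩ : Fin n) = i + 1 := by
    intro i
    ext
    simp [Fin.val_add]
  have hne : List.ofFn s ≠ [] := by
    simpa [List.ofFn_eq_nil_iff] using NeZero.ne n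
  simp only [IsSimpleCycle, List.map_ofFn, List.nodup_ofFn, List.get_ofFn]
  constructor
  · rintro ⟨_, hclosed, hedge, hvertex⟩
    refine ⟨fun i => ?_, hedge, hvertex⟩
    simpa [Fin.cast, hidx] using hclosed (Fin.cast (by simp) i)
  · rintro ⟨hclosed, hedge, hvertex⟩
    refine ⟨hne, fun i => ?_, hedge, hvertex⟩
    have := hclosed (Fin.cast (by simp) i)
    rw [← hidx] at this
    simpa [Fin.cast] using this

lemma forall_isSimpleCycle_iff {p : List (g.E × Bool) → Prop} :
    (∀ c, g.IsSimpleCycle c → p c) ↔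
      ∀ (n : ℕ) [NeZero n] (s : Fin n → g.E × Bool), IsCyclicSteps s → p (List.ofFn s) := by
  refine ⟨fun h n _ s hs => h _ (isSimpleCycle_ofFn.mpr hs), fun h c hc => ?_⟩
  have : NeZero c.length := ⟨fun h0 => hc.1 (List.length_eq_zero_iff.mp h0)⟩
  rw [← List.ofFn_get c] at hc ⊢
  exact h _ _ (isSimpleCycle_ofFn.mp hc)

lemma isCycleEdgeSet_iff {S : Finset g.E} :
    g.IsCycleEdgeSet S ↔ ∃ (n : ℕ) (_ : NeZero n) (s : Fin n → g.E × Bool),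
      IsCyclicSteps s ∧ Finset.univ.image (fun i => (s i).1) = S := by
  have hset {n : ℕ} (s : Fin n → g.E × Bool) :
      ((List.ofFn s).map Prod.fst).toFinset = Finset.univ.image fun i => (s i).1 := by
    ext e
    simp [List.mem_ofFn]
  constructor
  · rintro ⟨c, hc, rfl⟩
    revert c
    rw [forall_isSimpleCycle_iff]
    exact fun n _ s hs => ⟨n, inferInstance, s, hs, (hset s).symm⟩
  · rintro ⟨n, _, s, hs, rfl⟩
    exact ⟨_, isSimpleCycle_ofFn.mpr hs, hset s⟩

/-- The weight of an edge in the `1`-chain of a step traversing it: `1` forward, `-1` backward. -/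
def stepSign (b : Bool) : ℚ := if b then 1 else -1

lemma stepSign_mul_self (b : Bool) : stepSign b * stepSign b = 1 := by
  cases b <;> simp [stepSign]

lemma stepSign_ne_zero (b : Bool) : stepSign b ≠ 0 := by
  cases b <;> simp [stepSign]

lemma stepSign_injective : Function.Injective stepSign := by
  intro a b
  cases a <;> cases b <;> norm_num [stepSign]

lemma stepSign_smul_vertexEval_sub (t : g.E × Bool) :
    stepSign t.2 • ((vertexEval (g.tgt t.1) : Module.Dual ℚ (g.V → ℚ)) - vertexEval (g.src t.1)) =
      vertexEval (g.stepTgt t) - vertexEval (g.stepSrc t) := by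
  obtain ⟨e, b⟩ := t
  cases b <;> simp [stepSign, stepSrc, stepTgt]

/-- The signed indicator of the edges traversed by a family of steps, as a `1`-chain. -/
def stepChain {n : ℕ} (s : Fin n → g.E × Bool) : g.E → ℚ :=
  ∑ i, Pi.single (s i).1 (stepSign (s i).2)

namespace IsCyclicSteps

variable {n : ℕ} [NeZero n] {s : Fin n → g.E × Bool}

lemma stepChain_apply (hs : IsCyclicSteps s) (i : Fin n) :
    stepChain s (s i).1 = stepSign (s i).2 := by
  rw [stepChain, Finset.sum_apply, Finset.sum_eq_single i _ (by simp), Pi.single_eq_same]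
  exact fun j _ hj => Pi.single_eq_of_ne (hs.edge_injective.ne hj).symm _

lemma stepChain_ne_zero_iff (hs : IsCyclicSteps s) {e : g.E} :
    stepChain s e ≠ 0 ↔ e ∈ Set.range fun i => (s i).1 := by
  refine ⟨fun he => ?_, ?_⟩
  · contrapose! he
    rw [stepChain, Finset.sum_apply]
    exact Finset.sum_eq_zero fun i _ => Pi.single_eq_of_ne (fun h => he ⟨i, h.symm⟩) _
  · rintro ⟨i, rfl⟩
    exact hs.stepChain_apply i ▸ stepSign_ne_zero _

lemma stepChain_mem_circulations (hs : IsCyclicSteps s) :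
    stepChain s ∈ circulations g.src g.tgt := by
  rw [mem_circulations, stepChain, map_sum]
  simp only [boundary_single, stepSign_smul_vertexEval_sub, hs.closed, Finset.sum_sub_distrib,
    sub_eq_zero]
  exact Equiv.sum_comp (Equiv.addRight (1 : Fin n)) fun i => vertexEval (g.stepSrc (s i))

/-- Conservation at the vertex `stepSrc (s (i + 1))`. -/
lemma mul_stepSign_succ (hs : IsCyclicSteps s) {y : g.E → ℚ} (hy : y ∈ circulations g.src g.tgt)
    (hsupp : ∀ e ∉ Set.range fun i => (s i).1, y e = 0) (i : Fin n) :
    y (s (i + 1)).1 * stepSign (s (i + 1)).2 = y (s i).1 * stepSign (s i).2 := by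
  rw [mem_circulations, boundary_eq_sum_of_support_subset_range hs.edge_injective hsupp] at hy
  have hcons : ∀ j, y (s j).1 • ((vertexEval (g.tgt (s j).1) : Module.Dual ℚ (g.V → ℚ)) -
      vertexEval (g.src (s j).1)) = (y (s j).1 * stepSign (s j).2) •
        (vertexEval (g.stepSrc (s (j + 1))) - vertexEval (g.stepSrc (s j))) := fun j => by
    rw [← hs.closed, ← stepSign_smul_vertexEval_sub, smul_smul, mul_assoc, stepSign_mul_self,
      mul_one]
  have hdelta := LinearMap.congr_fun hy (Pi.single (g.stepSrc (s (i + 1))) 1)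
  simp only [hcons, LinearMap.sum_apply, LinearMap.smul_apply, LinearMap.sub_apply,
    LinearMap.proj_apply, Pi.single_apply, hs.vertex_injective.eq_iff, add_left_inj, smul_eq_mul,
    mul_sub, mul_ite, mul_one, mul_zero, Finset.sum_sub_distrib, Finset.sum_ite_eq',
    Finset.mem_univ, if_true, LinearMap.zero_apply] at hdelta
  linarith

lemma exists_eq_smul_stepChain (hs : IsCyclicSteps s) {y : g.E → ℚ}
    (hy : y ∈ circulations g.src g.tgt) (hsupp : ∀ e ∉ Set.range fun i => (s i).1, y e = 0) :
    ∃ c : ℚ, y = c • stepChain s := by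
  have hconst : ∀ i, y (s i).1 * stepSign (s i).2 = y (s 0).1 * stepSign (s 0).2 := by
    rintro ⟨m, hm⟩
    induction m with
    | zero => rfl
    | succ m ih =>
      have hsucc : (⟨m + 1, hm⟩ : Fin n) = ⟨m, by omega⟩ + 1 := by
        simp [Fin.ext_iff, Fin.val_add, Nat.mod_eq_of_lt hm]
      rw [hsucc, hs.mul_stepSign_succ hy hsupp, ih]
  refine ⟨y (s 0).1 * stepSign (s 0).2, funext fun e => ?_⟩
  by_cases he : e ∈ Set.range fun i => (s i).1
  · obtain ⟨i, rfl⟩ := he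
    rw [Pi.smul_apply, hs.stepChain_apply, smul_eq_mul, ← hconst i, mul_assoc, stepSign_mul_self,
      mul_one]
  · rw [hsupp e he, Pi.smul_apply, not_not.mp (hs.stepChain_ne_zero_iff.not.mpr he), smul_zero]

end IsCyclicSteps

lemma stepTgt_eq_stepSrc_of_fst_eq {x y : g.E × Bool} (hxy : x.1 = y.1)
    (hne : g.stepSrc x ≠ g.stepSrc y) : g.stepTgt x = g.stepSrc y := by
  obtain ⟨e, x⟩ := x
  obtain ⟨e', y⟩ := y
  obtain rfl : e = e' := hxy
  cases x <;> cases y <;> simp [stepSrc, stepTgt] at hne ⊢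

lemma isCyclicSteps_of_nonbacktracking {n : ℕ} [NeZero n] {t : ℕ → g.E × Bool}
    (hwalk : ∀ k, g.stepTgt (t k) = g.stepSrc (t (k + 1)))
    (hback : ∀ k, (t (k + 1)).1 ≠ (t k).1) (hclosed : g.stepSrc (t n) = g.stepSrc (t 0))
    (hinj : Set.InjOn (fun k => g.stepSrc (t k)) (Set.Iio n)) :
    IsCyclicSteps fun k : Fin n => t k where
  closed k := by
    rw [hwalk, Fin.val_add, Fin.val_one', Nat.add_mod_mod]
    obtain h | h : (k : ℕ) + 1 < n ∨ (k : ℕ) + 1 = n := by omega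
    · rw [Nat.mod_eq_of_lt h]
    · rw [h, Nat.mod_self, hclosed]
  edge_injective := by
    refine .of_lt_imp_ne fun a b hab heq => ?_
    have hne : g.stepSrc (t a) ≠ g.stepSrc (t b) :=
      fun h => hab.ne (Fin.ext (hinj a.isLt b.isLt h))
    have hsucc : (a : ℕ) + 1 = b :=
      hinj (show (a : ℕ) + 1 < n by omega) b.isLt
        ((hwalk a).symm.trans (stepTgt_eq_stepSrc_of_fst_eq heq hne))
    exact hback a (hsucc ▸ heq.symm)
  vertex_injective a b h := Fin.ext (hinj a.isLt b.isLt h)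

lemma exists_next_step {z : g.E → ℚ} (hz : z ∈ circulations g.src g.tgt)
    (hloop : ∀ e, z e ≠ 0 → g.src e ≠ g.tgt e) {t : g.E × Bool} (ht : z t.1 ≠ 0) :
    ∃ t' : g.E × Bool, z t'.1 ≠ 0 ∧ g.stepTgt t = g.stepSrc t' ∧ t'.1 ≠ t.1 := by
  by_contra! hcon
  have hdelta := LinearMap.congr_fun (mem_circulations.mp hz) (Pi.single (g.stepTgt t) 1)
  rw [boundary_apply, LinearMap.zero_apply, Finset.sum_eq_single t.1 _ (by simp)] at hdelta
  · have hends := hloop _ ht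
    obtain ⟨e, b⟩ := t
    refine ht ?_
    cases b <;> simpa [stepTgt, hends, hends.symm] using hdelta
  · intro e _ hne
    by_contra hmul
    have hze := left_ne_zero_of_mul hmul
    have hsrc : g.src e ≠ g.stepTgt t := fun h => hne (hcon (e, true) hze h.symm)
    have htgt : g.tgt e ≠ g.stepTgt t := fun h => hne (hcon (e, false) hze h.symm)
    simp [hsrc, htgt] at hmul

lemma exists_isCyclicSteps_support {z : g.E → ℚ} (hz : z ∈ circulations g.src g.tgt)
    (hne : z ≠ 0) : ∃ (n : ℕ) (_ : NeZero n) (s : Fin n → g.E × Bool),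
      IsCyclicSteps s ∧ ∀ i, z (s i).1 ≠ 0 := by
  by_cases hloop : ∀ e, z e ≠ 0 → g.src e ≠ g.tgt e
  swap
  · push Not at hloop
    obtain ⟨e, he, heq⟩ := hloop
    exact ⟨1, inferInstance, fun _ => (e, true), ⟨fun _ => by simp [stepTgt, stepSrc, heq],
      Function.injective_of_subsingleton _, Function.injective_of_subsingleton _⟩, fun _ => he⟩
  obtain ⟨e, he⟩ := Function.ne_iff.mp hne
  have hnext : ∀ t : {t : g.E × Bool // z t.1 ≠ 0}, ∃ t' : {t : g.E × Bool // z t.1 ≠ 0},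
      g.stepTgt t.1 = g.stepSrc t'.1 ∧ t'.1.1 ≠ t.1.1 := fun t => by
    obtain ⟨t', ht', h⟩ := exists_next_step hz hloop t.2
    exact ⟨⟨t', ht'⟩, h⟩
  choose next hwalk hback using hnext
  set t : ℕ → {t : g.E × Bool // z t.1 ≠ 0} := fun k => next^[k] ⟨(e, true), he⟩
  have ht : ∀ k, t (k + 1) = next (t k) := fun k => Function.iterate_succ_apply' _ _ _
  obtain ⟨i, n, hn, hreturn, hinj⟩ := exists_first_return fun k => g.stepSrc (t k).1
  have : NeZero n := ⟨hn.ne'⟩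
  refine ⟨n, this, fun k => (t (i + k)).1, isCyclicSteps_of_nonbacktracking
    (t := fun k => (t (i + k)).1) (fun k => ?_) (fun k => ?_) hreturn hinj, fun k => (t (i + k)).2⟩
  · rw [← add_assoc, ht, hwalk]
  · rw [← add_assoc, ht]
    exact hback _

theorem circulations_eq_span_stepChain :
    circulations g.src g.tgt = Submodule.span ℚ {z | ∃ (n : ℕ) (_ : NeZero n)
      (s : Fin n → g.E × Bool), IsCyclicSteps s ∧ stepChain s = z} := by
  refine le_antisymm (fun z hz => ?_) (Submodule.span_le.mpr ?_)
  · induction hm : (Function.support z).ncard using Nat.strong_induction_on generalizing z with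
    | _ m ih =>
    obtain rfl | hne := eq_or_ne z 0
    · exact zero_mem _
    obtain ⟨n, hn, s, hs, hsupp⟩ := exists_isCyclicSteps_support hz hne
    set c := z (s 0).1 * stepSign (s 0).2
    have hlt : (Function.support (z - c • stepChain s)).ncard < m := by
      rw [← hm]
      refine Set.ncard_lt_ncard (Set.ssubset_iff_of_subset (fun e he => ?_) |>.mpr
        ⟨(s 0).1, hsupp 0, ?_⟩)
      · contrapose! he
        have hrange : e ∉ Set.range fun i => (s i).1 := by
          rintro ⟨i, rfl⟩
          exact he (hsupp i)
        simp [Function.notMem_support.mp he, not_not.mp (hs.stepChain_ne_zero_iff.not.mpr hrange)]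
      · simp [c, hs.stepChain_apply, mul_assoc, stepSign_mul_self]
    rw [← sub_add_cancel z (c • stepChain s)]
    exact add_mem
      (ih _ hlt _ (sub_mem hz (Submodule.smul_mem _ _ hs.stepChain_mem_circulations)) rfl)
      (Submodule.smul_mem _ _ (Submodule.subset_span ⟨n, hn, s, hs, rfl⟩))
  · rintro _ ⟨n, _, s, hs, rfl⟩
    exact hs.stepChain_mem_circulations

lemma exists_isCyclicSteps_of_apply_ne_zero {z : g.E → ℚ} (hz : z ∈ circulations g.src g.tgt)
    {e : g.E} (he : z e ≠ 0) : ∃ (n : ℕ) (_ : NeZero n) (s : Fin n → g.E × Bool),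
      IsCyclicSteps s ∧ e ∈ Set.range fun i => (s i).1 := by
  contrapose! he
  rw [circulations_eq_span_stepChain] at hz
  suffices h : Submodule.span ℚ _ ≤ LinearMap.ker (LinearMap.proj e : (g.E → ℚ) →ₗ[ℚ] ℚ) from h hz
  rw [Submodule.span_le]
  rintro _ ⟨n, hn, s, hs, rfl⟩
  exact not_not.mp (hs.stepChain_ne_zero_iff.not.mpr (he n hn s hs))

end GraphMonomial

/-! ### Path-cacti in terms of circulations -/

namespace GraphMonomial

variable {L : ℕ} {K : Type} {g : GraphMonomial L K}

/-- The sources of the edges of the closure of `g`, in which the extra edge `none` runs from the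
output to the input. -/
def closureSrc (g : GraphMonomial L K) : Option g.E → g.V := fun o => o.elim g.vout g.src

/-- The targets of the edges of the closure of `g`, in which the extra edge `none` runs from the
output to the input. -/
def closureTgt (g : GraphMonomial L K) : Option g.E → g.V := fun o => o.elim g.vin g.tgt

lemma mem_circulations_closure_iff {z : Option g.E → ℚ} :
    z ∈ circulations g.closureSrc g.closureTgt ↔ boundary g.src g.tgt (fun e => z (some e)) =
      z none • (vertexEval g.vout - vertexEval g.vin) := by
  rw [mem_circulations, boundary, Fintype.linearCombination_apply, Fintype.sum_option,
    ← neg_sub (vertexEval g.vin), smul_neg, eq_neg_iff_add_eq_zero, add_comm, boundary,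
    Fintype.linearCombination_apply]
  rfl

section Path

variable {d : ℕ} {v : Fin (d + 1) → g.V} {f : Fin d → g.E}

lemma mem_circulations_closure_iff_sub (hp : IsDirectedPath g.src g.tgt g.vin g.vout v f)
    {z : Option g.E → ℚ} :
    z ∈ circulations g.closureSrc g.closureTgt ↔
      (fun e => z (some e)) - z none • (Set.range f).indicator 1 ∈ circulations g.src g.tgt := by
  rw [mem_circulations_closure_iff, mem_circulations, map_sub, map_smul, hp.boundary_indicator,
    sub_eq_zero]

lemma isConnectedGraph_closure_iff (hp : IsDirectedPath g.src g.tgt g.vin g.vout v f) :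
    IsConnectedGraph g.closureSrc g.closureTgt ↔ IsConnectedGraph g.src g.tgt := by
  simp only [isConnectedGraph_iff_forall_invariant]
  refine forall_congr' fun p =>
    ⟨fun h hinv => h fun o => ?_, fun h hinv => h fun e => hinv (some e)⟩
  cases o with
  | none =>
    change p g.vout ↔ p g.vin
    rw [← hp.last_eq, ← hp.first_eq]
    exact hp.invariant_iff (fun j => hinv (f j)) _ _
  | some e => exact hinv e

lemma one_mem_circulations_closure_iff (hp : IsDirectedPath g.src g.tgt g.vin g.vout v f) :
    1 ∈ circulations g.closureSrc g.closureTgt ↔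
      1 - (Set.range f).indicator 1 ∈ circulations g.src g.tgt := by
  rw [mem_circulations_closure_iff_sub hp, Pi.one_apply, one_smul]
  rfl

lemma mul_mem_circulations_of_closure (hp : IsDirectedPath g.src g.tgt g.vin g.vout v f)
    (H : HasCactusCirculations g.closureSrc g.closureTgt) {z : g.E → ℚ}
    (hz : z ∈ circulations g.src g.tgt) {w : Option g.E → ℚ}
    (hw : w ∈ circulations g.closureSrc g.closureTgt) :
    z * (fun e => w (some e)) ∈ circulations g.src g.tgt := by
  have hz' : (fun o => o.elim 0 z) ∈ circulations g.closureSrc g.closureTgt := by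
    rw [mem_circulations_closure_iff_sub hp, Option.elim_none, zero_smul, sub_zero]
    exact hz
  have hmul := H.mul_mem _ hz' _ hw
  rwa [mem_circulations_closure_iff_sub hp, Pi.mul_apply, Option.elim_none, zero_mul, zero_smul,
    sub_zero] at hmul

lemma apply_eq_zero_of_mem_path (hp : IsDirectedPath g.src g.tgt g.vin g.vout v f)
    (H : HasCactusCirculations g.closureSrc g.closureTgt) {z : g.E → ℚ}
    (hz : z ∈ circulations g.src g.tgt) {e : g.E} (he : e ∈ Set.range f) : z e = 0 := by
  have hpath : (fun o => o.elim 1 ((Set.range f).indicator 1)) ∈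
      circulations g.closureSrc g.closureTgt := by
    simp [mem_circulations_closure_iff_sub hp]
  have hzero := hp.eq_zero_of_support (mul_mem_circulations_of_closure hp H hz hpath)
    fun e he => by simp [he]
  simpa [he] using congrFun hzero e

lemma hasCactusCirculations_closure (hp : IsDirectedPath g.src g.tgt g.vin g.vout v f)
    (hconn : IsConnectedGraph g.src g.tgt)
    (hone : 1 - (Set.range f).indicator 1 ∈ circulations g.src g.tgt)
    (hmul : ∀ z ∈ circulations g.src g.tgt, ∀ w ∈ circulations g.src g.tgt,
      z * w ∈ circulations g.src g.tgt)
    (hvanish : ∀ z ∈ circulations g.src g.tgt, ∀ e ∈ Set.range f, z e = 0) :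
    HasCactusCirculations g.closureSrc g.closureTgt where
  connected := (isConnectedGraph_closure_iff hp).mpr hconn
  one_mem := (one_mem_circulations_closure_iff hp).mpr hone
  mul_mem z hz w hw := by
    rw [mem_circulations_closure_iff_sub hp] at hz hw ⊢
    convert hmul _ hz _ hw using 1
    funext e
    by_cases he : e ∈ Set.range f
    · have hze := hvanish _ hz e he
      have hwe := hvanish _ hw e he
      simp only [Pi.sub_apply, Pi.smul_apply, Pi.mul_apply, Set.indicator_of_mem he, Pi.one_apply,
        smul_eq_mul, mul_one, sub_eq_zero] at hze hwe ⊢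
      rw [hze, hwe, sub_self, sub_self, zero_mul]
    · simp [he]

end Path

lemma isDirectedCycleList_ofFn_iff {n : ℕ} [NeZero n] {s : Fin n → g.E × Bool} :
    g.IsDirectedCycleList (List.ofFn s) ↔ ∀ i, (s i).2 = (s 0).2 := by
  simp only [IsDirectedCycleList, List.forall_mem_ofFn_iff]
  refine ⟨?_, fun h => ?_⟩
  · rintro (h | h) i <;> rw [h i, h 0]
  · cases h0 : (s 0).2 <;> simp [h, h0]

lemma IsCyclicSteps.indicator_eq_smul_stepChain {n : ℕ} [NeZero n] {s : Fin n → g.E × Bool}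
    (hs : IsCyclicSteps s) (hdir : ∀ i, (s i).2 = (s 0).2) :
    (Set.range fun i => (s i).1).indicator 1 = stepSign (s 0).2 • stepChain s := by
  funext e
  by_cases he : e ∈ Set.range fun i => (s i).1
  · obtain ⟨i, rfl⟩ := he
    rw [Set.indicator_of_mem (Set.mem_range_self i), Pi.smul_apply, hs.stepChain_apply, hdir i,
      smul_eq_mul, stepSign_mul_self, Pi.one_apply]
  · rw [Set.indicator_of_notMem he, Pi.smul_apply,
      not_not.mp (hs.stepChain_ne_zero_iff.not.mpr he), smul_zero]

lemma circulations_eq_span_indicator (hdir : ∀ c, g.IsSimpleCycle c → g.IsDirectedCycleList c) :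
    circulations g.src g.tgt = Submodule.span ℚ
      {z | ∃ S, g.IsCycleEdgeSet S ∧ (S : Set g.E).indicator 1 = z} := by
  simp only [forall_isSimpleCycle_iff, isDirectedCycleList_ofFn_iff] at hdir
  refine le_antisymm ?_ (Submodule.span_le.mpr ?_)
  · rw [circulations_eq_span_stepChain, Submodule.span_le]
    rintro _ ⟨n, hn, s, hs, rfl⟩
    rw [← one_smul ℚ (stepChain s), ← stepSign_mul_self (s 0).2, mul_smul,
      ← hs.indicator_eq_smul_stepChain (hdir n s hs)]
    refine Submodule.smul_mem _ _ (Submodule.subset_span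
      ⟨_, isCycleEdgeSet_iff.mpr ⟨n, hn, s, hs, rfl⟩, by simp⟩)
  · rintro _ ⟨S, hS, rfl⟩
    obtain ⟨n, _, s, hs, rfl⟩ := isCycleEdgeSet_iff.mp hS
    rw [Finset.coe_image, Finset.coe_univ, Set.image_univ,
      hs.indicator_eq_smul_stepChain (hdir n s hs)]
    exact Submodule.smul_mem _ _ hs.stepChain_mem_circulations

lemma mul_mem_circulations_of_disjoint_cycles
    (hdir : ∀ c, g.IsSimpleCycle c → g.IsDirectedCycleList c)
    (hdisj : ∀ S T, g.IsCycleEdgeSet S → g.IsCycleEdgeSet T → S ≠ T → Disjoint S T)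
    {z w : g.E → ℚ} (hz : z ∈ circulations g.src g.tgt) (hw : w ∈ circulations g.src g.tgt) :
    z * w ∈ circulations g.src g.tgt := by
  have hle : circulations g.src g.tgt * circulations g.src g.tgt ≤ circulations g.src g.tgt := by
    nth_rw 1 2 [circulations_eq_span_indicator hdir]
    rw [Submodule.span_mul_span, Submodule.span_le]
    rintro _ ⟨_, ⟨S, hS, rfl⟩, _, ⟨T, hT, rfl⟩, rfl⟩
    change Set.indicator _ _ * Set.indicator _ _ ∈ _
    rw [← Set.inter_indicator_one]
    obtain rfl | hne := eq_or_ne S T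
    · rw [Set.inter_self, circulations_eq_span_indicator hdir]
      exact Submodule.subset_span ⟨S, hS, rfl⟩
    · rw [(Finset.disjoint_coe.mpr (hdisj S T hS hT hne)).inter_eq, Set.indicator_empty]
      exact zero_mem _
  exact hle (Submodule.mul_mem_mul hz hw)

lemma one_sub_indicator_mem_circulations {P : Set g.E}
    (hdir : ∀ c, g.IsSimpleCycle c → g.IsDirectedCycleList c)
    (hP : ∀ S, g.IsCycleEdgeSet S → ∀ e ∈ S, e ∉ P)
    (huniq : ∀ e ∉ P, ∃! S, g.IsCycleEdgeSet S ∧ e ∈ S) :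
    1 - P.indicator 1 ∈ circulations g.src g.tgt := by
  have hsum : 1 - P.indicator (1 : g.E → ℚ) =
      ∑ S with g.IsCycleEdgeSet S, (S : Set g.E).indicator 1 := by
    funext e
    simp only [Pi.sub_apply, Pi.one_apply, Finset.sum_apply, Set.indicator_apply, Finset.mem_coe,
      Finset.sum_boole, Finset.filter_filter]
    by_cases he : e ∈ P
    · rw [if_pos he, Finset.filter_false_of_mem fun S _ h => hP S h.1 e h.2 he]
      simp
    · obtain ⟨S, hS, hS'⟩ := huniq e he
      rw [if_neg he, show Finset.univ.filter (fun S => g.IsCycleEdgeSet S ∧ e ∈ S) = {S} from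
        Finset.eq_singleton_iff_unique_mem.mpr
          ⟨by simpa using hS, fun T hT => hS' T (by simpa using hT)⟩]
      simp
  rw [hsum, circulations_eq_span_indicator hdir]
  exact sum_mem fun S hS => Submodule.subset_span ⟨S, (Finset.mem_filter.mp hS).2, rfl⟩

theorem IsPathCactusType.hasCactusCirculations (hg : g.IsPathCactusType) :
    HasCactusCirculations g.closureSrc g.closureTgt := by
  obtain ⟨hconn, d, v, f, hv, -, hends, hin, hout, hcycle, huniq, -⟩ := hg
  have hp : IsDirectedPath g.src g.tgt g.vin g.vout v f :=
    ⟨hv, fun j => (hends j).1, fun j => (hends j).2, hin.symm, hout.symm⟩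
  have hdir : ∀ c, g.IsSimpleCycle c → g.IsDirectedCycleList c := fun c hc => (hcycle c hc).1
  have hP : ∀ S, g.IsCycleEdgeSet S → ∀ e ∈ S, e ∉ Set.range f := by
    rintro _ ⟨c, hc, rfl⟩ e he
    obtain ⟨s, hs, rfl⟩ := List.mem_map.mp (List.mem_toFinset.mp he)
    exact (hcycle c hc).2 s hs
  refine hasCactusCirculations_closure hp hconn
    (one_sub_indicator_mem_circulations hdir hP huniq) (fun z hz w hw => ?_) fun z hz e he => ?_
  · refine mul_mem_circulations_of_disjoint_cycles hdir (fun S T hS hT hne => ?_) hz hw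
    refine Finset.disjoint_left.mpr fun e heS heT => hne ?_
    exact (huniq e (hP S hS e heS)).unique ⟨hS, heS⟩ ⟨hT, heT⟩
  · by_contra hze
    obtain ⟨n, hn, s, hs, i, rfl⟩ := exists_isCyclicSteps_of_apply_ne_zero hz hze
    exact hP _ (isCycleEdgeSet_iff.mpr ⟨n, hn, s, hs, rfl⟩) _ (by simp) he

section MulMem

variable (hmul : ∀ z ∈ circulations g.src g.tgt, ∀ w ∈ circulations g.src g.tgt,
  z * w ∈ circulations g.src g.tgt)
include hmul

lemma IsCyclicSteps.exists_mul_stepChain_eq {n : ℕ} [NeZero n] {s : Fin n → g.E × Bool}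
    (hs : IsCyclicSteps s) {z : g.E → ℚ} (hz : z ∈ circulations g.src g.tgt) :
    ∃ c : ℚ, z * stepChain s = c • stepChain s := by
  refine hs.exists_eq_smul_stepChain (hmul z hz _ hs.stepChain_mem_circulations) fun e he => ?_
  rw [Pi.mul_apply, not_not.mp (hs.stepChain_ne_zero_iff.not.mpr he), mul_zero]

lemma IsCyclicSteps.snd_eq {n : ℕ} [NeZero n] {s : Fin n → g.E × Bool} (hs : IsCyclicSteps s)
    (i j : Fin n) : (s i).2 = (s j).2 := by
  obtain ⟨c, hc⟩ := hs.exists_mul_stepChain_eq hmul hs.stepChain_mem_circulations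
  have hsign (i : Fin n) : stepSign (s i).2 = c := by
    have h := congrFun hc (s i).1
    rw [Pi.mul_apply, Pi.smul_apply, hs.stepChain_apply, smul_eq_mul] at h
    exact mul_right_cancel₀ (stepSign_ne_zero _) h
  exact stepSign_injective ((hsign i).trans (hsign j).symm)

lemma IsCycleEdgeSet.subset_of_mem {S T : Finset g.E} (hS : g.IsCycleEdgeSet S)
    (hT : g.IsCycleEdgeSet T) {e : g.E} (heS : e ∈ S) (heT : e ∈ T) : S ⊆ T := by
  obtain ⟨n, _, s, hs, rfl⟩ := isCycleEdgeSet_iff.mp hS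
  obtain ⟨m, _, t, ht, rfl⟩ := isCycleEdgeSet_iff.mp hT
  obtain ⟨c, hc⟩ := hs.exists_mul_stepChain_eq hmul ht.stepChain_mem_circulations
  have hval {a : g.E} (ha : a ∈ Finset.univ.image fun i => (s i).1) : stepChain t a = c := by
    refine mul_right_cancel₀ (hs.stepChain_ne_zero_iff.mpr (by simpa using ha)) (congrFun hc a)
  intro a ha
  have hne := ht.stepChain_ne_zero_iff.mpr (by simpa using heT)
  rw [hval heS, ← hval ha, ht.stepChain_ne_zero_iff] at hne
  simpa using hne

lemma existsUnique_isCycleEdgeSet {z : g.E → ℚ} (hz : z ∈ circulations g.src g.tgt) {e : g.E}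
    (he : z e ≠ 0) : ∃! S, g.IsCycleEdgeSet S ∧ e ∈ S := by
  obtain ⟨n, hn, s, hs, hes⟩ := exists_isCyclicSteps_of_apply_ne_zero hz he
  have hS := isCycleEdgeSet_iff.mpr ⟨n, hn, s, hs, rfl⟩
  have heS : e ∈ Finset.univ.image fun i => (s i).1 := by simpa using hes
  exact ⟨_, ⟨hS, heS⟩, fun T ⟨hT, heT⟩ =>
    (hT.subset_of_mem hmul hS heT heS).antisymm (hS.subset_of_mem hmul hT heS heT)⟩

end MulMem

theorem isPathCactusType_of_hasCactusCirculations
    (H : HasCactusCirculations g.closureSrc g.closureTgt) : g.IsPathCactusType := by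
  obtain ⟨d, v, f, hp⟩ : ∃ (d : ℕ) (v : Fin (d + 1) → g.V) (f : Fin d → g.E),
      IsDirectedPath g.src g.tgt g.vin g.vout v f :=
    exists_isDirectedPath_of_reflTransGen <| reflTransGen_of_boundary_eq
      (z := fun _ => 1) (fun _ => zero_le_one)
      (by simpa using mem_circulations_closure_iff.mp H.one_mem)
  have hmul : ∀ z ∈ circulations g.src g.tgt, ∀ w ∈ circulations g.src g.tgt,
      z * w ∈ circulations g.src g.tgt := fun z hz w hw => by
    refine mul_mem_circulations_of_closure hp H hz (w := fun o => o.elim 0 w) ?_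
    simpa [mem_circulations_closure_iff_sub hp] using hw
  have hvanish : ∀ z ∈ circulations g.src g.tgt, ∀ e ∈ Set.range f, z e = 0 :=
    fun z hz e he => apply_eq_zero_of_mem_path hp H hz he
  have hconn := (isConnectedGraph_closure_iff hp).mp H.connected
  refine ⟨hconn, d, v, f, hp.vertex_injective, hp.edge_injective,
    fun j => ⟨hp.src_eq j, hp.tgt_eq j⟩, hp.first_eq.symm, hp.last_eq.symm, ?_,
    fun e he => ?_, fun w => ?_⟩
  · rw [forall_isSimpleCycle_iff]
    intro n _ s hs
    refine ⟨isDirectedCycleList_ofFn_iff.mpr fun i => hs.snd_eq hmul i 0, ?_⟩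
    rw [List.forall_mem_ofFn_iff]
    exact fun i hi => hs.stepChain_ne_zero_iff.mpr ⟨i, rfl⟩
      (hvanish _ hs.stepChain_mem_circulations _ hi)
  · refine existsUnique_isCycleEdgeSet hmul ((one_mem_circulations_closure_iff hp).mp H.one_mem) ?_
    simp [he]
  · obtain ⟨i, hi⟩ := hp.exists_reachOn_vertex hconn w
    refine ⟨i, hi, fun j hj => hp.vertex_injective ?_⟩
    exact eq_of_reachOn_of_reachOn_compl hvanish
      (((connSetoid g.src g.tgt (Set.range f)).symm' hj).trans hi) (hp.reachOn_compl j i)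

theorem isPathCactusType_iff :
    g.IsPathCactusType ↔ HasCactusCirculations g.closureSrc g.closureTgt :=
  ⟨IsPathCactusType.hasCactusCirculations, isPathCactusType_of_hasCactusCirculations⟩

lemma isCactusType_iff : g.IsCactusType ↔ g.IsPathCactusType ∧ g.vin = g.vout := by
  constructor
  · rintro ⟨hroots, hconn, hdir, huniq⟩
    refine ⟨⟨hconn, 0, fun _ => g.vin, Fin.elim0, Function.injective_of_subsingleton (α := Fin 1) _,
      Function.injective_of_subsingleton _, nofun, rfl, hroots.symm,
      fun c hc => ⟨hdir c hc, by simp⟩, fun e _ => huniq e, fun w => ⟨0, ?_, by simp⟩⟩, hroots⟩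
    rw [Set.range_eq_empty]
    exact hconn w g.vin
  · rintro ⟨⟨hconn, d, v, f, hv, -, -, hin, hout, hcycle, huniq, -⟩, hroots⟩
    obtain rfl : d = 0 := by simpa using hv (hin.symm.trans (hroots.trans hout))
    exact ⟨hroots, hconn, fun c hc => (hcycle c hc).1, fun e => huniq e (by simp)⟩

end GraphMonomial

/-! ### Operations on path-cacti -/

namespace GraphMonomial

section Constructions

variable {L N : ℕ} {K : Type}

/-- The monomial with a single vertex and no edge, representing the identity matrix. -/
def unit (L : ℕ) (K : Type) : GraphMonomial L K where
  V := Unit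
  E := Empty
  fintV := inferInstance
  fintE := inferInstance
  src := Empty.elim
  tgt := Empty.elim
  vin := ()
  vout := ()
  labL := Empty.elim
  labK := Empty.elim

lemma isPathCactusType_unit : (unit L K).IsPathCactusType := by
  have hmem : ∀ z, z ∈ circulations (unit L K).closureSrc (unit L K).closureTgt := fun z => by
    have : IsEmpty (unit L K).E := inferInstanceAs (IsEmpty Empty)
    rw [mem_circulations_closure_iff, show (unit L K).vout = (unit L K).vin from rfl, sub_self,
      smul_zero, Subsingleton.elim (fun e => z (some e)) 0, map_zero]
  exact isPathCactusType_iff.mpr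
    ⟨fun _ _ => Relation.ReflTransGen.refl, hmem _, fun _ _ _ _ => hmem _⟩

lemma eval_unit (A : Fin L → K → Matrix (Fin N) (Fin N) ℂ) : (unit L K).eval A = 1 := by
  ext i j
  have : IsEmpty (unit L K).E := inferInstanceAs (IsEmpty Empty)
  refine (Fintype.sum_eq_single (fun _ => j) fun φ hφ => if_neg fun h => ?_).trans ?_
  · exact hφ (funext fun _ => h.1)
  · simp [Matrix.one_apply, eq_comm]

/-- The monomial consisting of a single edge from the input to the output. -/
def edge (ℓ : Fin L) (k : K) : GraphMonomial L K where
  V := Bool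
  E := Unit
  fintV := inferInstance
  fintE := inferInstance
  src := fun _ => false
  tgt := fun _ => true
  vin := false
  vout := true
  labL := fun _ => ℓ
  labK := fun _ => k

lemma isPathCactusType_edge (ℓ : Fin L) (k : K) : (edge ℓ k).IsPathCactusType := by
  have hmem : ∀ z, z ∈ circulations (edge ℓ k).closureSrc (edge ℓ k).closureTgt ↔
      z (some ()) = z none := fun z => by
    have hne : vertexEval (edge ℓ k).vout - vertexEval (edge ℓ k).vin ≠ 0 :=
      sub_ne_zero.mpr (vertexEval_injective.ne Bool.true_eq_false.mp)
    rw [mem_circulations_closure_iff, boundary, Fintype.linearCombination_apply]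
    have hsum := Fintype.sum_unique (ι := Unit) fun e =>
      z (some e) • (vertexEval (edge ℓ k).vout - vertexEval (edge ℓ k).vin)
    exact (iff_of_eq (congrArg (· = _) hsum)).trans (smul_left_injective ℚ hne).eq_iff
  refine isPathCactusType_iff.mpr ⟨isConnectedGraph_iff_forall_invariant.mpr fun p hp => ?_,
    (hmem _).mpr rfl, fun z hz w hw => ?_⟩
  · exact Bool.forall_bool.mpr ⟨Bool.forall_bool.mpr ⟨id, (hp (some ())).mp⟩,
      Bool.forall_bool.mpr ⟨(hp (some ())).mpr, id⟩⟩
  · rw [hmem] at hz hw ⊢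
    rw [Pi.mul_apply, Pi.mul_apply, hz, hw]

lemma eval_edge (A : Fin L → K → Matrix (Fin N) (Fin N) ℂ) (ℓ : Fin L) (k : K) :
    (edge ℓ k).eval A = A ℓ k := by
  ext i j
  refine (Fintype.sum_eq_single (Bool.rec j i) fun φ hφ => if_neg fun h => ?_).trans ?_
  · exact hφ (funext (Bool.rec h.1 h.2))
  · exact (if_pos ⟨rfl, rfl⟩).trans (Fintype.prod_unique (ι := Unit) fun _ => A ℓ k i j)

/-- The monomial obtained from `g` by identifying the input and the output. -/
def close (g : GraphMonomial L K) : GraphMonomial L K where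
  V := Quot fun x y => x = g.vout ∧ y = g.vin
  E := g.E
  fintV := Fintype.ofFinite _
  fintE := g.fintE
  src := fun e => Quot.mk _ (g.src e)
  tgt := fun e => Quot.mk _ (g.tgt e)
  vin := Quot.mk _ g.vin
  vout := Quot.mk _ g.vout
  labL := g.labL
  labK := g.labK

lemma isGluing_close (g : GraphMonomial L K) :
    IsGluing (V' := g.close.V) (Quot.mk _) g.vout g.vin :=
  isGluing_quot_mk

lemma IsPathCactusType.isCactusType_close {g : GraphMonomial L K} (hg : g.IsPathCactusType) :
    g.close.IsCactusType := by
  refine isCactusType_iff.mpr ⟨isPathCactusType_iff.mpr ?_, g.isGluing_close.map_eq.symm⟩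
  exact .of_remove_loop (Equiv.refl _) g.isGluing_close.map_eq
    ((isPathCactusType_iff.mp hg).contract (Equiv.refl _) g.isGluing_close)

lemma eval_close (g : GraphMonomial L K) (A : Fin L → K → Matrix (Fin N) (Fin N) ℂ) :
    g.close.eval A = dproj (g.eval A) := by
  ext i j
  refine (g.isGluing_close.sum_comp fun φ : g.V → Fin N =>
    if φ g.vin = j ∧ φ g.vout = i then
      ∏ e : g.E, A (g.labL e) (g.labK e) (φ (g.tgt e)) (φ (g.src e)) else 0).trans ?_
  simp only [dproj, eval, Matrix.of_apply]
  split_ifs with hij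
  · exact Finset.sum_congr rfl fun φ _ => by grind
  · exact Finset.sum_eq_zero fun φ _ => by grind

/-- The concatenation of two monomials, identifying the output of `g₂` with the input of `g₁`. -/
def concat (g₁ g₂ : GraphMonomial L K) : GraphMonomial L K where
  V := Quot fun x y : g₁.V ⊕ g₂.V => x = Sum.inl g₁.vin ∧ y = Sum.inr g₂.vout
  E := g₁.E ⊕ g₂.E
  fintV := Fintype.ofFinite _
  fintE := inferInstance
  src := fun e => Quot.mk _ (Sum.map g₁.src g₂.src e)
  tgt := fun e => Quot.mk _ (Sum.map g₁.tgt g₂.tgt e)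
  vin := Quot.mk _ (Sum.inr g₂.vin)
  vout := Quot.mk _ (Sum.inl g₁.vout)
  labL := Sum.elim g₁.labL g₂.labL
  labK := Sum.elim g₁.labK g₂.labK

lemma isGluing_concat (g₁ g₂ : GraphMonomial L K) :
    IsGluing (V' := (concat g₁ g₂).V) (Quot.mk _) (Sum.inl g₁.vin) (Sum.inr g₂.vout) :=
  isGluing_quot_mk

lemma eval_concat (g₁ g₂ : GraphMonomial L K) (A : Fin L → K → Matrix (Fin N) (Fin N) ℂ) :
    (concat g₁ g₂).eval A = g₁.eval A * g₂.eval A := by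
  ext i j
  let P₁ : (g₁.V → Fin N) → ℂ := fun φ =>
    ∏ e, A (g₁.labL e) (g₁.labK e) (φ (g₁.tgt e)) (φ (g₁.src e))
  let P₂ : (g₂.V → Fin N) → ℂ := fun φ =>
    ∏ e, A (g₂.labL e) (g₂.labK e) (φ (g₂.tgt e)) (φ (g₂.src e))
  have hsum : (concat g₁ g₂).eval A i j = ∑ φ : g₁.V ⊕ g₂.V → Fin N,
      if φ (Sum.inl g₁.vin) = φ (Sum.inr g₂.vout) then
        if φ (Sum.inr g₂.vin) = j ∧ φ (Sum.inl g₁.vout) = i then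
          P₁ (φ ∘ Sum.inl) * P₂ (φ ∘ Sum.inr) else 0 else 0 := by
    rw [← (isGluing_concat g₁ g₂).sum_comp]
    exact Finset.sum_congr rfl fun φ _ => if_congr Iff.rfl (Fintype.prod_sum_type _) rfl
  rw [hsum, ← (Equiv.sumArrowEquivProdArrow g₁.V g₂.V (Fin N)).symm.sum_comp,
    Fintype.sum_prod_type]
  simp only [Matrix.mul_apply, eval, Matrix.of_apply, Finset.sum_mul_sum]
  conv_rhs => rw [Finset.sum_comm]; enter [2, φ₁]; rw [Finset.sum_comm]
  refine Finset.sum_congr rfl fun φ₁ _ => Finset.sum_congr rfl fun φ₂ _ => ?_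
  rw [Finset.sum_eq_single (φ₁ g₁.vin) (fun k _ hk => by simp [hk.symm]) (by simp)]
  simp only [P₁, P₂]
  grind

lemma IsPathCactusType.concat {g₁ g₂ : GraphMonomial L K} (hg₁ : g₁.IsPathCactusType)
    (hg₂ : g₂.IsPathCactusType) : (concat g₁ g₂).IsPathCactusType :=
  isPathCactusType_iff.mpr <|
    (isPathCactusType_iff.mp hg₁).join (isGluing_concat g₁ g₂) (isPathCactusType_iff.mp hg₂)

end Constructions

end GraphMonomial

/-! ### The generated algebra -/

section GeneratedAlgebra

variable {Ω : Type*} {K : Type} {L N : ℕ}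

namespace GraphMonomial

lemma eval_eq_graphSum (g : GraphMonomial L K) (A : Fin L → K → Matrix (Fin N) (Fin N) ℂ)
    (i j : Fin N) : g.eval A i j = graphSum g.closureSrc g.closureTgt
      fun o => o.elim (Matrix.single j i 1) fun e => A (g.labL e) (g.labK e) := by
  simp only [eval, Matrix.of_apply, graphSum, Fintype.prod_option, closureSrc, closureTgt,
    Option.elim_none, Option.elim_some, Matrix.single_apply, ite_mul, one_mul, zero_mul]
  exact Finset.sum_congr rfl fun φ _ => if_congr (and_congr eq_comm eq_comm) rfl rfl

/-- Random matrices are matrices over the commutative ring `Ω → ℂ`, where the graph sum of the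
closure of `g` is the trace of the label of the extra edge against an element of `S`. -/
theorem IsPathCactusType.eval_mem {g : GraphMonomial L K} (hg : g.IsPathCactusType)
    {S : Submonoid (Ω → Matrix (Fin N) (Fin N) ℂ)} (hS : ∀ x ∈ S, (fun ω => dproj (x ω)) ∈ S)
    {A : Fin L → K → Ω → Matrix (Fin N) (Fin N) ℂ} (hA : ∀ ℓ k, A ℓ k ∈ S) :
    (fun ω => g.eval fun ℓ k => A ℓ k ω) ∈ S := by
  let Φ := Matrix.piAlgEquiv ℂ (n := Fin N) (β := fun _ : Ω => ℂ)
  have hdiag : ∀ M, Φ (Matrix.diagonal M.diag) = fun ω => dproj (Φ M ω) := fun M => by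
    ext ω i j
    by_cases hij : i = j <;> simp [Φ, dproj, hij]
  let X : Matrix (Fin N) (Fin N) (Ω → ℂ) → Option g.E → Matrix (Fin N) (Fin N) (Ω → ℂ) :=
    fun B o => o.elim B fun e => Matrix.piEquiv.symm (A (g.labL e) (g.labK e))
  obtain ⟨M, hM, htrace⟩ := (isPathCactusType_iff.mp hg).graphSumIsTrace (S.comap Φ)
    (fun M hM => by rw [Submonoid.mem_comap, hdiag]; exact hS _ hM) none (X 0) fun o ho => by
      obtain ⟨e, rfl⟩ := Option.ne_none_iff_exists'.mp ho
      exact hA _ _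
  suffices heval : (fun ω => g.eval fun ℓ k => A ℓ k ω) = Φ M from heval ▸ hM
  ext ω i j
  let ev := Pi.evalRingHom (fun _ : Ω => ℂ) ω
  let Y := X (Matrix.single j i 1)
  have hY : ∀ o ≠ none, Y o = X 0 o := fun o ho => by
    obtain ⟨e, rfl⟩ := Option.ne_none_iff_exists'.mp ho
    rfl
  have hYω : ∀ o, (Y o).map ev =
      o.elim (Matrix.single j i 1) fun e => A (g.labL e) (g.labK e) ω := fun o => by
    cases o with
    | none => exact (Matrix.map_single j i 1 ev).trans (by rw [map_one]; rfl)
    | some e => rfl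
  calc g.eval (fun ℓ k => A ℓ k ω) i j
      = graphSum g.closureSrc g.closureTgt fun o => (Y o).map ev := by
        rw [eval_eq_graphSum, funext hYω]
    _ = ev (graphSum g.closureSrc g.closureTgt Y) := (map_graphSum ev Y).symm
    _ = ev (Matrix.trace (M * Matrix.single j i 1)) := congrArg ev (htrace Y hY)
    _ = Φ M ω i j := by
        rw [Matrix.trace_mul_single]
        exact congrFun (one_smul _ _) ω

end GraphMonomial

/-- The diagonal projection `Δ` acting pointwise on random matrices. -/
def diagProj (Ω : Type*) (N : ℕ) :
    (Ω → Matrix (Fin N) (Fin N) ℂ) →ₗ[ℂ] (Ω → Matrix (Fin N) (Fin N) ℂ) where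
  toFun x := fun ω => dproj (x ω)
  map_add' x y := by
    ext ω i j
    by_cases h : i = j <;> simp [dproj, h]
  map_smul' c x := by
    ext ω i j
    by_cases h : i = j <;> simp [dproj, h]

variable (A : Fin L → K → Ω → Matrix (Fin N) (Fin N) ℂ)

/-- The evaluations at `A` of the path-cactus monomials; they span `ℱ_N`. -/
def pathCactusEvals : Set (Ω → Matrix (Fin N) (Fin N) ℂ) :=
  {x | ∃ g : GraphMonomial L K, g.IsPathCactusType ∧ x = fun ω => g.eval fun ℓ k => A ℓ k ω}

/-- The evaluations at `A` of the cactus-type monomials; they span `𝒞_N`. -/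
def cactusEvals : Set (Ω → Matrix (Fin N) (Fin N) ℂ) :=
  {x | ∃ g : GraphMonomial L K, g.IsCactusType ∧ x = fun ω => g.eval fun ℓ k => A ℓ k ω}

/-- The algebra `𝒜_N`: the smallest unital subalgebra of the algebra of random matrices containing
the matrices of `A` and stable under the diagonal projection. -/
def generatedAlgebra : Subalgebra ℂ (Ω → Matrix (Fin N) (Fin N) ℂ) :=
  sInf {S | (∀ ℓ k, (fun ω => A ℓ k ω) ∈ S) ∧ ∀ x ∈ S, (fun ω => dproj (x ω)) ∈ S}

lemma cactusEvals_subset_pathCactusEvals : cactusEvals A ⊆ pathCactusEvals A := by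
  rintro _ ⟨g, hg, rfl⟩
  exact ⟨g, (GraphMonomial.isCactusType_iff.mp hg).1, rfl⟩

lemma diagProj_image_pathCactusEvals : diagProj Ω N '' pathCactusEvals A = cactusEvals A := by
  refine Set.Subset.antisymm ?_ ?_
  · rintro _ ⟨_, ⟨g, hg, rfl⟩, rfl⟩
    exact ⟨_, hg.isCactusType_close, funext fun _ => (g.eval_close _).symm⟩
  · rintro _ ⟨g, hg, rfl⟩
    obtain ⟨hg, hroot⟩ := GraphMonomial.isCactusType_iff.mp hg
    refine ⟨_, ⟨g, hg, rfl⟩, ?_⟩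
    ext ω i j
    refine (ite_eq_left_iff.mpr fun hij => ?_ : dproj (g.eval fun ℓ k => A ℓ k ω) i j = _)
    exact (Finset.sum_eq_zero fun φ _ => if_neg fun h => hij (by rw [← h.1, ← h.2, hroot])).symm

/-- The space `ℱ_N` as a subalgebra; concatenating path-cacti multiplies their evaluations. -/
def pathCactusAlgebra : Subalgebra ℂ (Ω → Matrix (Fin N) (Fin N) ℂ) :=
  (Submodule.span ℂ (pathCactusEvals A)).toSubalgebra
    (Submodule.subset_span ⟨_, GraphMonomial.isPathCactusType_unit,
      funext fun _ => (GraphMonomial.eval_unit _).symm⟩)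
    fun x y hx hy => by
      have hxy := Submodule.mul_mem_mul hx hy
      rw [Submodule.span_mul_span] at hxy
      refine Submodule.span_mono ?_ hxy
      rintro _ ⟨_, ⟨g₁, hg₁, rfl⟩, _, ⟨g₂, hg₂, rfl⟩, rfl⟩
      exact ⟨_, hg₁.concat hg₂, funext fun _ => (GraphMonomial.eval_concat _ _ _).symm⟩

lemma pathCactusAlgebra_le_generatedAlgebra : pathCactusAlgebra A ≤ generatedAlgebra A := by
  refine le_sInf fun S hS => (Submodule.span_le (p := Subalgebra.toSubmodule S)).mpr ?_
  rintro _ ⟨g, hg, rfl⟩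
  exact hg.eval_mem (S := S.toSubmonoid) hS.2 hS.1

lemma generatedAlgebra_le_pathCactusAlgebra : generatedAlgebra A ≤ pathCactusAlgebra A := by
  refine sInf_le ⟨fun ℓ k => ?_, fun x hx => ?_⟩
  · exact Submodule.subset_span ⟨_, GraphMonomial.isPathCactusType_edge ℓ k,
      funext fun _ => (GraphMonomial.eval_edge (fun ℓ k => A ℓ k _) ℓ k).symm⟩
  · have hΔx : diagProj Ω N x ∈ (Submodule.span ℂ (pathCactusEvals A)).map (diagProj Ω N) :=
      Submodule.mem_map_of_mem hx
    rw [Submodule.map_span, diagProj_image_pathCactusEvals] at hΔx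
    exact Submodule.span_mono (cactusEvals_subset_pathCactusEvals A) hΔx

end GeneratedAlgebra

theorem span_path_cacti_eq_generated_algebra_general {Ω : Type*} {K : Type} {L N : ℕ}
    (A : Fin L → K → Ω → Matrix (Fin N) (Fin N) ℂ) :
    Submodule.span ℂ (pathCactusEvals A) = Subalgebra.toSubmodule (generatedAlgebra A) ∧
      Submodule.span ℂ (cactusEvals A) =
        (Subalgebra.toSubmodule (generatedAlgebra A)).map (diagProj Ω N) := by
  have hpath : Submodule.span ℂ (pathCactusEvals A) = Subalgebra.toSubmodule (generatedAlgebra A) :=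
    congrArg Subalgebra.toSubmodule <|
      (pathCactusAlgebra_le_generatedAlgebra A).antisymm (generatedAlgebra_le_pathCactusAlgebra A)
  refine ⟨hpath, ?_⟩
  rw [← hpath, Submodule.map_span, diagProj_image_pathCactusEvals]

/-- Lemma 4.3.
Let `𝒜_N` be the smallest unital subalgebra of the algebra of `N × N` random
matrices containing the matrices `A_{N,ℓ}^{(k)}` and stable under the diagonal
projection `Δ`.  Then `ℱ_N = 𝒜_N` and consequently `𝒞_N = Δ(𝒜_N)`. -/
theorem span_path_cacti_eq_generated_algebra
    {Ω : Type} [MeasurableSpace Ω] (μ : Measure Ω) [IsProbabilityMeasure μ]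
    {K : Type} [Nonempty K] [Finite K] {L : ℕ} (hL : 1 ≤ L) (N : ℕ)
    (A : Fin L → K → Ω → Matrix (Fin N) (Fin N) ℂ)
    (hmeas : ∀ ℓ k, EntriesMeasurable (A ℓ k))
    (hbdd : ∀ ℓ k, EntriesBounded μ (A ℓ k)) :
    ((Submodule.span ℂ {x : Ω → Matrix (Fin N) (Fin N) ℂ |
          ∃ g : GraphMonomial L K, g.IsPathCactusType ∧
            x = fun ω => g.eval fun ℓ k => A ℓ k ω} :
        Set (Ω → Matrix (Fin N) (Fin N) ℂ)) =
      ((sInf {S : Subalgebra ℂ (Ω → Matrix (Fin N) (Fin N) ℂ) |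
          (∀ (ℓ : Fin L) (k : K), (fun ω => A ℓ k ω) ∈ S) ∧
          ∀ x ∈ S, (fun ω => dproj (x ω)) ∈ S} :
        Subalgebra ℂ (Ω → Matrix (Fin N) (Fin N) ℂ)) :
        Set (Ω → Matrix (Fin N) (Fin N) ℂ))) ∧
    ((Submodule.span ℂ {x : Ω → Matrix (Fin N) (Fin N) ℂ |
          ∃ g : GraphMonomial L K, g.IsCactusType ∧
            x = fun ω => g.eval fun ℓ k => A ℓ k ω} :
        Set (Ω → Matrix (Fin N) (Fin N) ℂ)) =
      (fun x : Ω → Matrix (Fin N) (Fin N) ℂ => fun ω => dproj (x ω)) ''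
        ((sInf {S : Subalgebra ℂ (Ω → Matrix (Fin N) (Fin N) ℂ) |
            (∀ (ℓ : Fin L) (k : K), (fun ω => A ℓ k ω) ∈ S) ∧
            ∀ x ∈ S, (fun ω => dproj (x ω)) ∈ S} :
          Subalgebra ℂ (Ω → Matrix (Fin N) (Fin N) ℂ)) :
          Set (Ω → Matrix (Fin N) (Fin N) ℂ))) :=
  have h := span_path_cacti_eq_generated_algebra_general A
  ⟨congrArg SetLike.coe h.1, congrArg SetLike.coe h.2⟩
end
end

section
/- With the test graph T = (V,E) and the vertices v_0 = v_n, v_1, …, v_n as in the construction below, one has, for every N, E[(1/N) Tr((M_{N,1} − ΔM_{N,1})(M_{N,2} − ΔM_{N,2}) ⋯ (M_{N,n} − ΔM_{N,n}))] = Σ_π τ⁰_N[T^π], where the sum runs over all partitions π of V such that for every i ∈ {1,…,n} the vertices v_i and v_{i−1} lie in different blocks of π. -/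
open MeasureTheory ProbabilityTheory Filter Matrix Asymptotics
open scoped BigOperators ENNReal
open scoped Classical

noncomputable section

/-- The monomial `g₀(A) X_{k(1)} g₁(A) ⋯ X_{k(d)} g_d(A)` with graph-monomial
coefficients, evaluated at the family `A ℓi`. -/
def cactusMonomialEval {L : ℕ} {K : Type} {N : ℕ}
    (A : Fin L → K → Matrix (Fin N) (Fin N) ℂ) (ℓi : Fin L) (dd : ℕ)
    (kk : ℕ → K) (gg : ℕ → GraphMonomial L K) : Matrix (Fin N) (Fin N) ℂ :=
  (gg 0).eval A *
    (List.ofFn fun j : Fin dd =>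
      A ℓi (kk ((j : ℕ) + 1)) * (gg ((j : ℕ) + 1)).eval A).prod
/-! ### The test graph `T` built from the monomials `t_1, …, t_n` -/

section Construction

variable {L : ℕ} {K : Type}

/-- Cyclic successor in `Fin n`. -/
def nxt {n : ℕ} (i : Fin n) : Fin n := ⟨((i : ℕ) + 1) % n, Nat.mod_lt _ i.pos⟩

/-- Vertices of the disjoint union of the graph monomials `t_1, …, t_n`:
for each `i`, the path vertices of `t_i` are the roots of the attached cacti
`g_{0,i}, …, g_{d_i,i}`. -/
def BigV (n : ℕ) (d : Fin n → ℕ) (g : Fin n → ℕ → GraphMonomial L K) : Type :=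
  Σ i : Fin n, Σ j : Fin (d i + 1), (g i (j : ℕ)).V

instance (n : ℕ) (d : Fin n → ℕ) (g : Fin n → ℕ → GraphMonomial L K) :
    Fintype (BigV n d g) := by
  unfold BigV; infer_instance

/-- Edges: the edges of the cacti, plus the path edges (the edge `(i, j)` goes
from the path vertex `u_{i,j+1}` to `u_{i,j}` and carries the label
`(ℓ_i, k_i(j+1))`). -/
def BigE (n : ℕ) (d : Fin n → ℕ) (g : Fin n → ℕ → GraphMonomial L K) : Type :=
  (Σ i : Fin n, Σ j : Fin (d i + 1), (g i (j : ℕ)).E) ⊕ (Σ i : Fin n, Fin (d i))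

instance (n : ℕ) (d : Fin n → ℕ) (g : Fin n → ℕ → GraphMonomial L K) :
    Fintype (BigE n d g) := by
  unfold BigE; infer_instance

/-- The path vertex `u_{i,j}`, i.e. the root of the cactus `g_{j,i}`. -/
def pathVtx (n : ℕ) (d : Fin n → ℕ) (g : Fin n → ℕ → GraphMonomial L K)
    (i : Fin n) (j : Fin (d i + 1)) : BigV n d g :=
  ⟨i, j, (g i (j : ℕ)).vin⟩

/-- The input vertex of `t_i`. -/
def inVtx (n : ℕ) (d : Fin n → ℕ) (g : Fin n → ℕ → GraphMonomial L K)
    (i : Fin n) : BigV n d g :=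
  pathVtx n d g i (Fin.last (d i))

/-- The output vertex of `t_i`. -/
def outVtx (n : ℕ) (d : Fin n → ℕ) (g : Fin n → ℕ → GraphMonomial L K)
    (i : Fin n) : BigV n d g :=
  pathVtx n d g i 0

/-- The setoid identifying, for each `i` (cyclically), the input of `t_i` with
the output of `t_{i+1}`. -/
def glueSetoid (n : ℕ) (d : Fin n → ℕ) (g : Fin n → ℕ → GraphMonomial L K) :
    Setoid (BigV n d g) :=
  ⟨Relation.EqvGen fun x y =>
      ∃ i : Fin n, x = inVtx n d g i ∧ y = outVtx n d g (nxt i),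
   Relation.EqvGen.is_equivalence _⟩

/-- Source map of the glued test graph `T`. -/
def bigSrc (n : ℕ) (d : Fin n → ℕ) (g : Fin n → ℕ → GraphMonomial L K) :
    BigE n d g → Quotient (glueSetoid n d g) := fun e =>
  match e with
  | Sum.inl ⟨i, j, e'⟩ =>
      Quotient.mk (glueSetoid n d g) ⟨i, j, (g i (j : ℕ)).src e'⟩
  | Sum.inr ⟨i, j⟩ =>
      Quotient.mk (glueSetoid n d g) (pathVtx n d g i j.succ)

/-- Target map of the glued test graph `T`. -/
def bigTgt (n : ℕ) (d : Fin n → ℕ) (g : Fin n → ℕ → GraphMonomial L K) :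
    BigE n d g → Quotient (glueSetoid n d g) := fun e =>
  match e with
  | Sum.inl ⟨i, j, e'⟩ =>
      Quotient.mk (glueSetoid n d g) ⟨i, j, (g i (j : ℕ)).tgt e'⟩
  | Sum.inr ⟨i, j⟩ =>
      Quotient.mk (glueSetoid n d g) (pathVtx n d g i j.castSucc)

/-- The family index (color) carried by each edge of `T`. -/
def bigCol (n : ℕ) (ℓv : Fin n → Fin L) (d : Fin n → ℕ)
    (g : Fin n → ℕ → GraphMonomial L K) : BigE n d g → Fin L := fun e =>
  match e with
  | Sum.inl ⟨i, j, e'⟩ => (g i (j : ℕ)).labL e'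
  | Sum.inr ⟨i, _⟩ => ℓv i

/-- The vertex `v_i` of `T` (the class of the input of `t_i`). -/
def vCls (n : ℕ) (d : Fin n → ℕ) (g : Fin n → ℕ → GraphMonomial L K)
    (i : Fin n) : Quotient (glueSetoid n d g) :=
  Quotient.mk (glueSetoid n d g) (inVtx n d g i)

/-- The test graph `T`, with the matrix `A_{N,ℓ}^{(k)}` assigned to each edge
labelled `(ℓ, k)`. -/
def bigTG (n : ℕ) (ℓv : Fin n → Fin L) (d : Fin n → ℕ) (kv : Fin n → ℕ → K)
    (g : Fin n → ℕ → GraphMonomial L K) {Ω : Type} (N : ℕ)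
    (A : Fin L → K → Ω → Matrix (Fin N) (Fin N) ℂ) : TestGraph N Ω where
  V := Quotient (glueSetoid n d g)
  E := BigE n d g
  fintV := @Quotient.fintype _ inferInstance (glueSetoid n d g)
    fun _ _ => Classical.propDecidable _
  fintE := inferInstance
  src := bigSrc n d g
  tgt := bigTgt n d g
  lab := fun e =>
    match e with
    | Sum.inl ⟨i, j, e'⟩ => fun ω => A ((g i (j : ℕ)).labL e') ((g i (j : ℕ)).labK e') ω
    | Sum.inr ⟨i, j⟩ => fun ω => A (ℓv i) (kv i ((j : ℕ) + 1)) ω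

end Construction

/-!
The trace of a product is a sum over cyclic paths of indices, and the entry `(x, y)` of the
evaluation `Mᵢ` of the monomial `tᵢ` is a sum over the assignments of indices to the vertices of
`tᵢ` that take the value `x` at the output and `y` at the input. Subtracting `ΔMᵢ` keeps the
assignments with distinct values at the input and the output of `tᵢ`. The trace of the centered
product is therefore a sum over assignments on the disjoint union of the `tᵢ` that agree at the
vertices glued in `T`, i.e. over assignments on `T` itself that separate `vᵢ` from `vᵢ₋₁`. Sorting
these by their kernel `π` turns the sum into the injective traces of the quotients `T^π`, and the
normalisations agree because `T^π` is connected.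
-/

section MatrixProducts

variable {ι R : Type*} [Fintype ι] [DecidableEq ι] [CommSemiring R]

lemma list_ofFn_prod_apply {m : ℕ} (B : Fin m → Matrix ι ι R) (a b : ι) :
    (List.ofFn B).prod a b = ∑ x : Fin (m + 1) → ι with x 0 = a ∧ x (Fin.last m) = b,
      ∏ j : Fin m, B j (x j.castSucc) (x j.succ) := by
  induction m generalizing a with
  | zero =>
    rw [Finset.sum_filter, ← (Equiv.funUnique (Fin 1) ι).symm.sum_comp]
    simp [Matrix.one_apply, ite_and]
  | succ m ih =>
    calc
      (List.ofFn B).prod a b = ∑ c, B 0 a c * ∑ x : Fin (m + 1) → ι with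
          x 0 = c ∧ x (Fin.last m) = b, ∏ j : Fin m, B j.succ (x j.castSucc) (x j.succ) := by
        simp only [List.ofFn_succ, List.prod_cons, Matrix.mul_apply, ih]
      _ = ∑ x : Fin (m + 1) → ι with x (Fin.last m) = b,
          B 0 a (x 0) * ∏ j : Fin m, B j.succ (x j.castSucc) (x j.succ) := by
        rw [← Finset.sum_fiberwise _ fun x : Fin (m + 1) → ι => x 0]
        refine Finset.sum_congr rfl fun c _ => ?_
        simp only [Finset.mul_sum, Finset.filter_filter, and_comm]
        exact Finset.sum_congr rfl fun x hx => by rw [(Finset.mem_filter.1 hx).2.2]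
      _ = _ := by
        refine Finset.sum_nbij' (fun x => (Fin.cons a x : Fin (m + 2) → ι)) Fin.tail ?_ ?_ ?_ ?_ ?_
        · simp [← Fin.succ_last]
        · simp [Fin.tail]
        · simp
        · simp only [Finset.mem_filter]
          rintro x ⟨-, rfl, -⟩
          exact Fin.cons_self_tail x
        · simp [Fin.prod_univ_succ]

lemma diagonal_mul_list_ofFn_prod_apply {m : ℕ} (D : Fin (m + 1) → ι → R)
    (X : Fin m → Matrix ι ι R) (a b : ι) :
    (Matrix.diagonal (D 0) *
        (List.ofFn fun j : Fin m => X j * Matrix.diagonal (D j.succ)).prod) a b =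
      ∑ x : Fin (m + 1) → ι with x 0 = a ∧ x (Fin.last m) = b,
        (∏ j, D j (x j)) * ∏ j : Fin m, X j (x j.castSucc) (x j.succ) := by
  rw [Matrix.diagonal_mul, list_ofFn_prod_apply, Finset.mul_sum]
  refine Finset.sum_congr rfl fun x hx => ?_
  obtain ⟨-, rfl, -⟩ := Finset.mem_filter.1 hx
  simp only [Matrix.mul_diagonal, Finset.prod_mul_distrib, Fin.prod_univ_succ fun j => D j (x j)]
  ring

lemma nxt_eq_finRotate {n : ℕ} : (nxt : Fin n → Fin n) = finRotate n := by
  funext i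
  obtain _ | n := n
  · exact i.elim0
  · ext
    simp [nxt, Fin.val_add]

lemma trace_list_ofFn_prod {n : ℕ} (hn : n ≠ 0) (B : Fin n → Matrix ι ι R) :
    Matrix.trace (List.ofFn B).prod = ∑ y : Fin n → ι, ∏ i, B i (y i) (y (nxt i)) := by
  obtain ⟨m, rfl⟩ := Nat.exists_eq_succ_of_ne_zero hn
  have succ_eq_nxt (x : Fin (m + 2) → ι) (hx : x 0 = x (Fin.last (m + 1))) (j : Fin (m + 1)) :
      x j.succ = x (nxt j).castSucc := by
    rw [nxt_eq_finRotate]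
    induction j using Fin.lastCases with
    | last => rw [Fin.succ_last, finRotate_last, Fin.castSucc_zero, hx]
    | cast j => rw [finRotate_apply, Fin.coeSucc_eq_succ, Fin.succ_castSucc]
  calc
    Matrix.trace (List.ofFn B).prod
      = ∑ c, ∑ x : Fin (m + 2) → ι with x 0 = c ∧ x (Fin.last (m + 1)) = c,
          ∏ j, B j (x j.castSucc) (x j.succ) := by
        simp only [Matrix.trace, Matrix.diag_apply, list_ofFn_prod_apply]
    _ = ∑ x : Fin (m + 2) → ι with x 0 = x (Fin.last (m + 1)),
          ∏ j, B j (x j.castSucc) (x j.succ) := by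
        rw [← Finset.sum_fiberwise _ fun x : Fin (m + 2) → ι => x (Fin.last (m + 1))]
        refine Finset.sum_congr rfl fun c _ => Finset.sum_congr ?_ fun _ _ => rfl
        rw [Finset.filter_filter]
        exact Finset.filter_congr fun x _ => and_congr_left fun h => by rw [h]
    _ = ∑ y : Fin (m + 1) → ι, ∏ i, B i (y i) (y (nxt i)) := by
        refine Finset.sum_nbij' Fin.init (fun y => Fin.snoc y (y 0)) ?_ ?_ ?_ ?_ ?_
        · simp
        · simp
        · simp only [Finset.mem_filter]
          rintro x ⟨-, hx⟩
          rw [Fin.init, Fin.castSucc_zero, hx, Fin.snoc_init_self]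
        · simp
        · simp only [Finset.mem_filter]
          rintro x ⟨-, hx⟩
          simp only [succ_eq_nxt x hx, Fin.init]

end MatrixProducts

section SumsOverMaps

variable {α R : Type*} [Fintype α]

lemma prod_sum_filter_eq_sum_sigma [CommSemiring R] {ι : Type*} [Fintype ι] {V : ι → Type*}
    [∀ i, Fintype (V i)] [DecidableEq (Σ i, V i)] (p : ∀ i, (V i → α) → Prop)
    [∀ i, DecidablePred (p i)] (f : ∀ i, (V i → α) → R) :
    ∏ i, ∑ ψ : V i → α with p i ψ, f i ψ =
      ∑ φ : (Σ i, V i) → α with ∀ i, p i fun v => φ ⟨i, v⟩, ∏ i, f i fun v => φ ⟨i, v⟩ := by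
  simp only [Finset.sum_filter, Fintype.prod_sum, Fintype.prod_ite_zero]
  exact ((Equiv.piCurry fun _ _ => α).sum_comp _).symm

variable {V : Type*} [Fintype V] [AddCommMonoid R]

lemma sum_comp_quotient_mk (s : Setoid V) [Fintype (Quotient s)]
    [DecidableEq (Quotient s)] (F : (V → α) → R) :
    ∑ χ : Quotient s → α, F (χ ∘ Quotient.mk s) = ∑ φ : V → α with s ≤ Setoid.ker φ, F φ := by
  rw [← s.liftEquiv.sum_comp]
  exact Finset.sum_subtype _ (by simp) F |>.symm

lemma sum_injective_comp_quotient_mk [DecidableEq α] (s : Setoid V) [Fintype (Quotient s)]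
    [DecidableEq (Quotient s)] (F : (V → α) → R) :
    ∑ χ : Quotient s → α with Function.Injective χ, F (χ ∘ Quotient.mk s) =
      ∑ φ : V → α with Setoid.ker φ = s, F φ := by
  have injective_iff (χ : Quotient s → α) :
      Function.Injective χ ↔ Setoid.ker (χ ∘ Quotient.mk s) ≤ s := by
    refine ⟨fun h a b hab => Quotient.exact (h hab), fun h => ?_⟩
    rintro ⟨a⟩ ⟨b⟩ hab
    exact Quotient.sound (h hab)
  simp only [Finset.sum_filter, injective_iff]
  rw [sum_comp_quotient_mk s fun φ => if Setoid.ker φ ≤ s then F φ else 0]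
  simp only [← Finset.sum_filter, Finset.filter_filter, ← le_antisymm_iff, eq_comm]

end SumsOverMaps

section GraphMonomials

variable {L N : ℕ} {K : Type} (a : Fin L → K → Matrix (Fin N) (Fin N) ℂ)

namespace GraphMonomial

variable (t : GraphMonomial L K)

/-- The contribution `∏ₑ A(φ(w), φ(v))`, over the edges `e` from `v` to `w`, of the index
assignment `φ` to the evaluation of a graph monomial. -/
def weight (φ : t.V → Fin N) : ℂ :=
  ∏ e : t.E, a (t.labL e) (t.labK e) (φ (t.tgt e)) (φ (t.src e))

lemma eval_apply (x y : Fin N) :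
    t.eval a x y = ∑ φ : t.V → Fin N with φ t.vin = y ∧ φ t.vout = x, t.weight a φ :=
  (Finset.sum_filter _ _).symm

lemma eval_eq_diagonal (ht : t.vin = t.vout) :
    t.eval a = Matrix.diagonal fun x => ∑ φ : t.V → Fin N with φ t.vin = x, t.weight a φ := by
  ext x y
  rw [eval_apply, ← ht, Matrix.diagonal_apply]
  split_ifs with hxy
  · simp only [hxy, and_self]
  · refine Finset.sum_eq_zero fun φ hφ => ?_
    obtain ⟨-, hy, hx⟩ := Finset.mem_filter.1 hφ
    exact absurd (hx.symm.trans hy) hxy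

lemma eval_sub_dproj_apply (x y : Fin N) :
    (t.eval a - dproj (t.eval a)) x y = ∑ φ : t.V → Fin N with
      φ t.vout = x ∧ φ t.vin = y ∧ φ t.vout ≠ φ t.vin, t.weight a φ := by
  rw [Matrix.sub_apply, dproj, Matrix.of_apply]
  split_ifs with hxy
  · rw [sub_self, Finset.sum_eq_zero]
    intro φ hφ
    obtain ⟨-, hx, hy, hne⟩ := Finset.mem_filter.1 hφ
    exact absurd (hx.trans (hxy.trans hy.symm)) hne
  · rw [sub_zero, eval_apply]
    refine Finset.sum_congr (Finset.filter_congr fun φ _ => ?_) fun _ _ => rfl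
    constructor
    · rintro ⟨rfl, rfl⟩
      exact ⟨rfl, rfl, hxy⟩
    · rintro ⟨rfl, rfl, -⟩
      exact ⟨rfl, rfl⟩

end GraphMonomial

lemma trace_centeredProd_eval {n : ℕ} (hn : n ≠ 0) (t : Fin n → GraphMonomial L K)
    [DecidableEq (Σ i, (t i).V)] :
    Matrix.trace (centeredProd fun i => (t i).eval a) =
      ∑ φ : (Σ i, (t i).V) → Fin N with (∀ i, φ ⟨i, (t i).vin⟩ = φ ⟨nxt i, (t (nxt i)).vout⟩) ∧
          ∀ i, φ ⟨i, (t i).vout⟩ ≠ φ ⟨i, (t i).vin⟩,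
        ∏ i, (t i).weight a fun v => φ ⟨i, v⟩ := by
  rw [centeredProd, trace_list_ofFn_prod hn]
  simp only [GraphMonomial.eval_sub_dproj_apply, prod_sum_filter_eq_sum_sigma]
  rw [← Finset.sum_fiberwise _ fun (φ : (Σ i, (t i).V) → Fin N) i => φ ⟨i, (t i).vout⟩]
  refine Finset.sum_congr rfl fun y _ => Finset.sum_congr ?_ fun _ _ => rfl
  ext φ
  simp only [Finset.mem_filter, Finset.mem_univ, true_and, funext_iff, forall_and]
  constructor
  · rintro ⟨hout, hin, hne⟩
    exact ⟨⟨fun i => (hin i).trans (hout _).symm, hne⟩, hout⟩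
  · rintro ⟨⟨hin, hne⟩, hout⟩
    exact ⟨hout, fun i => (hin i).trans (hout _), hne⟩

/-- The graph monomial `t_i` of the construction: a directed path with `d` edges, the `j`-th
carrying the label `(ℓ, k j)`, with the root of `g j` attached to its `j`-th vertex. The
vertices of the path are represented by the input vertices of the `g j`. -/
def cactusMonomial (ℓ : Fin L) (d : ℕ) (k : ℕ → K) (g : ℕ → GraphMonomial L K) :
    GraphMonomial L K where
  V := Σ j : Fin (d + 1), (g j).V
  E := (Σ j : Fin (d + 1), (g j).E) ⊕ Fin d
  fintV := inferInstance
  fintE := inferInstance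
  src := Sum.elim (fun e => ⟨e.1, (g e.1).src e.2⟩) fun j => ⟨j.succ, (g j.succ).vin⟩
  tgt := Sum.elim (fun e => ⟨e.1, (g e.1).tgt e.2⟩) fun j => ⟨j.castSucc, (g j.castSucc).vin⟩
  vin := ⟨Fin.last d, (g (Fin.last d)).vin⟩
  vout := ⟨0, (g (0 : Fin (d + 1))).vin⟩
  labL := Sum.elim (fun e => (g e.1).labL e.2) fun _ => ℓ
  labK := Sum.elim (fun e => (g e.1).labK e.2) fun j => k (j + 1)

namespace cactusMonomial

variable (ℓ : Fin L) (d : ℕ) (k : ℕ → K) (g : ℕ → GraphMonomial L K)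

lemma weight_eq (φ : (cactusMonomial ℓ d k g).V → Fin N) :
    (cactusMonomial ℓ d k g).weight a φ =
      (∏ j : Fin (d + 1), (g j).weight a fun v => φ ⟨j, v⟩) *
        ∏ j : Fin d, a ℓ (k (j + 1)) (φ ⟨j.castSucc, (g j.castSucc).vin⟩)
          (φ ⟨j.succ, (g j.succ).vin⟩) :=
  (Fintype.prod_sum_type _).trans (congrArg (· * _) (Fintype.prod_sigma _))

lemma eval_eq (hg : ∀ j ≤ d, (g j).vin = (g j).vout) :
    (cactusMonomial ℓ d k g).eval a = cactusMonomialEval a ℓ d k g := by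
  let rootedSum (j : ℕ) (x : Fin N) : ℂ :=
    ∑ ψ : (g j).V → Fin N with ψ (g j).vin = x, (g j).weight a ψ
  have eval_diagonal (j : ℕ) (hj : j ≤ d) : (g j).eval a = Matrix.diagonal (rootedSum j) :=
    (g j).eval_eq_diagonal a (hg j hj)
  ext x y
  symm
  calc
    cactusMonomialEval a ℓ d k g x y
      = (Matrix.diagonal (rootedSum 0) * (List.ofFn fun j : Fin d =>
          a ℓ (k (j + 1)) * Matrix.diagonal (rootedSum j.succ)).prod) x y := by
        simp only [← eval_diagonal _ (Fin.is_le _), ← eval_diagonal 0 (Nat.zero_le d)]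
        rfl
    _ = ∑ z : Fin (d + 1) → Fin N with z 0 = x ∧ z (Fin.last d) = y,
          (∏ j : Fin (d + 1), rootedSum j (z j)) *
            ∏ j : Fin d, a ℓ (k (j + 1)) (z j.castSucc) (z j.succ) :=
        diagonal_mul_list_ofFn_prod_apply (fun j : Fin (d + 1) => rootedSum j) _ x y
    _ = ∑ z : Fin (d + 1) → Fin N with z 0 = x ∧ z (Fin.last d) = y,
          ∑ φ : (cactusMonomial ℓ d k g).V → Fin N with
            (fun j : Fin (d + 1) => φ ⟨j, (g j).vin⟩) = z,
            (cactusMonomial ℓ d k g).weight a φ := by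
        refine Finset.sum_congr rfl fun z _ => ?_
        -- `(cactusMonomial ℓ d k g).V` does not unfold in instance search, so assignments of its
        -- vertices are enumerated with this instance and not with that of `Sigma`.
        let _ : DecidableEq (Σ j : Fin (d + 1), (g j).V) := fun _ _ => Classical.propDecidable _
        simp only [rootedSum, prod_sum_filter_eq_sum_sigma, Finset.sum_mul, ← funext_iff]
        refine Finset.sum_congr rfl fun φ hφ => ?_
        obtain ⟨-, rfl⟩ := Finset.mem_filter.1 hφ
        exact (weight_eq a ℓ d k g φ).symm
    _ = (cactusMonomial ℓ d k g).eval a x y := by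
        rw [Finset.sum_fiberwise_eq_sum_filter, GraphMonomial.eval_apply]
        simp only [Finset.mem_filter, Finset.mem_univ, true_and, and_comm]
        rfl

end cactusMonomial

end GraphMonomials

section TestGraphs

namespace TestGraph

variable {N : ℕ} {Ω : Type} (T : TestGraph N Ω)

/-- The contribution of the index assignment `φ` to the trace observable of a test graph. -/
def weight (ω : Ω) (φ : T.V → Fin N) : ℂ :=
  ∏ e : T.E, T.lab e ω (φ (T.tgt e)) (φ (T.src e))

lemma tau0Inner_eq (ω : Ω) :
    T.tau0Inner ω = ∑ φ : T.V → Fin N with Function.Injective φ, T.weight ω φ :=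
  (Finset.sum_filter _ _).symm

lemma tau0Inner_quot (π : Setoid T.V) (ω : Ω) :
    (T.quot π).tau0Inner ω = ∑ φ : T.V → Fin N with Setoid.ker φ = π, T.weight ω φ := by
  let _ : DecidableEq (Quotient π) := fun _ _ => Classical.propDecidable _
  exact (tau0Inner_eq _ ω).trans (sum_injective_comp_quotient_mk π (T.weight ω))

lemma sum_tau0Inner_quot [Fintype (Setoid T.V)] (P : Setoid T.V → Prop) [DecidablePred P] (ω : Ω) :
    ∑ π with P π, (T.quot π).tau0Inner ω =
      ∑ φ : T.V → Fin N with P (Setoid.ker φ), T.weight ω φ := by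
  simp only [tau0Inner_quot]
  refine (Finset.sum_fiberwise_eq_sum_filter _ _ Setoid.ker (T.weight ω)).trans ?_
  simp only [Finset.mem_filter, Finset.mem_univ, true_and]

variable [MeasurableSpace Ω] (μ : Measure Ω)

variable {T μ} in
lemma integrable_tau0Inner [IsFiniteMeasure μ] (hmeas : ∀ e, EntriesMeasurable (T.lab e))
    (hbdd : ∀ e, EntriesBounded μ (T.lab e)) : Integrable T.tau0Inner μ := by
  choose C hC using hbdd
  simp only [funext T.tau0Inner_eq]
  refine integrable_finsetSum _ fun φ _ => ?_
  have measurable_weight : Measurable fun ω => T.weight ω φ :=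
    Finset.measurable_prod _ fun e _ => hmeas e _ _
  refine Integrable.of_bound measurable_weight.aestronglyMeasurable (∏ e, C e) ?_
  filter_upwards [eventually_all.2 hC] with ω hω
  rw [weight, norm_prod]
  exact Finset.prod_le_prod (fun _ _ => norm_nonneg _) fun e _ => hω e _ _

end TestGraph

end TestGraphs

section Connectedness

variable {V E V' E' : Type} {src tgt : E → V} {src' tgt' : E' → V'}

lemma reachOn_map {a b : V} (hab : reachOn src tgt ∅ a b) (f : V → V') (h : E → E')
    (hsrc : ∀ e, src' (h e) = f (src e)) (htgt : ∀ e, tgt' (h e) = f (tgt e)) :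
    reachOn src' tgt' ∅ (f a) (f b) := by
  refine Relation.ReflTransGen.lift f ?_ _ _ hab
  rintro _ _ ⟨e, -, he⟩
  refine ⟨h e, Set.notMem_empty _, ?_⟩
  rw [hsrc, htgt]
  exact he.imp (And.imp (congrArg f) (congrArg f)) (And.imp (congrArg f) (congrArg f))

namespace IsConnectedGraph

lemma ncomp_eq_one [Nonempty V] (h : IsConnectedGraph src tgt) : ncomp src tgt = 1 := by
  have : Subsingleton (Quotient (connSetoid src tgt ∅)) :=
    ⟨by rintro ⟨a⟩ ⟨b⟩; exact Quotient.sound (h a b)⟩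
  exact Nat.card_of_subsingleton (Quotient.mk _ (Classical.arbitrary V))

lemma map_surjective (h : IsConnectedGraph src tgt) {f : V → V'} (hf : Function.Surjective f) :
    IsConnectedGraph (f ∘ src) (f ∘ tgt) :=
  hf.forall₂.2 fun a b => reachOn_map (h a b) f id (fun _ => rfl) fun _ => rfl

end IsConnectedGraph

lemma rel_of_rel_nxt {n : ℕ} (s : Setoid (Fin n)) (hs : ∀ i, s i (nxt i)) (i j : Fin n) :
    s i j := by
  obtain _ | n := n
  · exact i.elim0
  have rel_zero (i : Fin (n + 1)) : s 0 i := by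
    induction i using Fin.induction with
    | zero => exact s.refl 0
    | succ i ih =>
      have := hs i.castSucc
      rw [nxt_eq_finRotate, finRotate_apply, Fin.coeSucc_eq_succ] at this
      exact s.trans ih this
  exact s.trans (s.symm (rel_zero i)) (rel_zero j)

lemma cactusMonomial.isConnectedGraph {L : ℕ} {K : Type} (ℓ : Fin L) {d : ℕ} (k : ℕ → K)
    {g : ℕ → GraphMonomial L K} (hg : ∀ j ≤ d, IsConnectedGraph (g j).src (g j).tgt) :
    IsConnectedGraph (cactusMonomial ℓ d k g).src (cactusMonomial ℓ d k g).tgt := by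
  let t := cactusMonomial ℓ d k g
  let s := connSetoid t.src t.tgt ∅
  have rel_root (j : Fin (d + 1)) (v : (g j).V) : s ⟨j, (g j).vin⟩ ⟨j, v⟩ :=
    reachOn_map (src' := t.src) (tgt' := t.tgt) (hg j (Fin.is_le j) _ v) (fun v => ⟨j, v⟩)
      (fun e => Sum.inl ⟨j, e⟩) (fun _ => rfl) fun _ => rfl
  have rel_path (j : Fin (d + 1)) : s t.vout ⟨j, (g j).vin⟩ := by
    induction j using Fin.induction with
    | zero => exact s.refl _
    | succ j ih =>
      exact s.trans ih (.single ⟨Sum.inr j, Set.notMem_empty _, Or.inr ⟨rfl, rfl⟩⟩)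
  have rel_out (v : t.V) : s t.vout v := s.trans (rel_path v.1) (rel_root v.1 v.2)
  exact fun v w => s.trans (s.symm (rel_out v)) (rel_out w)

end Connectedness

lemma finite_setoid (V : Type*) [Finite V] : Finite (Setoid V) :=
  Finite.of_injective (fun s : Setoid V => s.r) fun _ _ h =>
    Setoid.ext fun a b => iff_of_eq (congrFun₂ h a b)

namespace TestGraph

variable {N : ℕ} {Ω : Type} {T : TestGraph N Ω}

lemma ncc_quot [Nonempty T.V] (hT : IsConnectedGraph T.src T.tgt) (π : Setoid T.V) :
    (T.quot π).ncc = 1 :=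
  have : Nonempty (Quotient π) := ‹Nonempty T.V›.map (Quotient.mk π)
  (hT.map_surjective (Quotient.mk_surjective (s := π))).ncomp_eq_one

lemma finsum_tau0_quot [Nonempty T.V] (hT : IsConnectedGraph T.src T.tgt) [MeasurableSpace Ω]
    {μ : Measure Ω} [IsFiniteMeasure μ] (hmeas : ∀ e, EntriesMeasurable (T.lab e))
    (hbdd : ∀ e, EntriesBounded μ (T.lab e)) (P : Setoid T.V → Prop) [DecidablePred P] :
    (∑ᶠ π, if P π then (T.quot π).tau0 μ else 0) =
      ∫ ω, (N : ℂ)⁻¹ * ∑ φ : T.V → Fin N with P (Setoid.ker φ), T.weight ω φ ∂μ := by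
  have := finite_setoid T.V
  have := Fintype.ofFinite (Setoid T.V)
  calc
    (∑ᶠ π, if P π then (T.quot π).tau0 μ else 0)
      = ∑ π with P π, (N : ℂ)⁻¹ * ∫ ω, (T.quot π).tau0Inner ω ∂μ := by
        simp only [finsum_eq_sum_of_fintype, ← Finset.sum_filter, tau0, ncc_quot hT, pow_one]
    _ = ∫ ω, (N : ℂ)⁻¹ * ∑ π with P π, (T.quot π).tau0Inner ω ∂μ := by
        rw [integral_const_mul, integral_finsetSum _ fun π _ =>
            integrable_tau0Inner (T := T.quot π) hmeas hbdd,
          Finset.mul_sum]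
    _ = _ := by simp only [sum_tau0Inner_quot]

end TestGraph

section Glue

variable {L : ℕ} {K : Type} {n : ℕ} {d : Fin n → ℕ} {g : Fin n → ℕ → GraphMonomial L K}

lemma glueSetoid_le_ker_iff {α : Type*} {φ : BigV n d g → α} :
    glueSetoid n d g ≤ Setoid.ker φ ↔ ∀ i, φ (inVtx n d g i) = φ (outVtx n d g (nxt i)) := by
  refine ⟨fun h i => h (.rel _ _ ⟨i, rfl, rfl⟩), fun h => Setoid.eqvGen_le ?_⟩
  rintro _ _ ⟨i, rfl, rfl⟩
  exact h i

lemma vCls_eq_mk_outVtx (i : Fin n) :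
    vCls n d g i = Quotient.mk (glueSetoid n d g) (outVtx n d g (nxt i)) :=
  Quotient.sound (.rel _ _ ⟨i, rfl, rfl⟩)

variable (ℓv : Fin n → Fin L) (kv : Fin n → ℕ → K) {N : ℕ} {Ω : Type}
  (A : Fin L → K → Ω → Matrix (Fin N) (Fin N) ℂ)

lemma weight_bigTG (ω : Ω) (χ : (bigTG n ℓv d kv g N A).V → Fin N) :
    (bigTG n ℓv d kv g N A).weight ω χ =
      ∏ i, (cactusMonomial (ℓv i) (d i) (kv i) (g i)).weight (fun ℓ k => A ℓ k ω) fun v =>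
        χ (Quotient.mk (glueSetoid n d g) ⟨i, v⟩) := by
  simp only [cactusMonomial.weight_eq, Finset.prod_mul_distrib]
  exact (Fintype.prod_sum_type _).trans <| congrArg₂ (· * ·)
    ((Fintype.prod_sigma _).trans <| Fintype.prod_congr _ _ fun _ => Fintype.prod_sigma _)
    (Fintype.prod_sigma _)

lemma isConnectedGraph_bigTG
    (hg : ∀ i, ∀ j ≤ d i, IsConnectedGraph (g i j).src (g i j).tgt) :
    IsConnectedGraph (bigTG n ℓv d kv g N A).src (bigTG n ℓv d kv g N A).tgt := by
  let T := bigTG n ℓv d kv g N A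
  let s := connSetoid T.src T.tgt ∅
  have rel_mk (i : Fin n) (v w : Σ j : Fin (d i + 1), (g i j).V) :
      s (Quotient.mk _ ⟨i, v⟩) (Quotient.mk _ ⟨i, w⟩) :=
    reachOn_map (src' := T.src) (tgt' := T.tgt)
      (cactusMonomial.isConnectedGraph (ℓv i) (kv i) (hg i) v w) (fun v => Quotient.mk _ ⟨i, v⟩)
      (Sum.map (fun e => ⟨i, e⟩) fun j => ⟨i, j⟩) (by rintro (_ | _) <;> rfl)
      (by rintro (_ | _) <;> rfl)
  have rel_vCls (i j : Fin n) : s (vCls n d g i) (vCls n d g j) := by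
    refine rel_of_rel_nxt (s.comap (vCls n d g)) (fun i => ?_) i j
    change s (vCls n d g i) (vCls n d g (nxt i))
    rw [vCls_eq_mk_outVtx i]
    exact rel_mk (nxt i) _ _
  rintro ⟨i, v⟩ ⟨j, w⟩
  exact s.trans (rel_mk i v _) (s.trans (rel_vCls i j) (rel_mk j _ w))

lemma trace_centeredProd_eq_sum_bigTG (hn : n ≠ 0)
    (hg : ∀ i, ∀ j ≤ d i, (g i j).vin = (g i j).vout) (ω : Ω) :
    Matrix.trace (centeredProd fun i =>
        cactusMonomialEval (fun ℓ k => A ℓ k ω) (ℓv i) (d i) (kv i) (g i)) =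
      ∑ χ : (bigTG n ℓv d kv g N A).V → Fin N with
          ∀ i, ¬ Setoid.ker χ (vCls n d g (nxt i)) (vCls n d g i),
        (bigTG n ℓv d kv g N A).weight ω χ := by
  let a (ℓ : Fin L) (k : K) := A ℓ k ω
  let t (i : Fin n) := cactusMonomial (ℓv i) (d i) (kv i) (g i)
  have nxt_surjective : Function.Surjective (nxt : Fin n → Fin n) :=
    nxt_eq_finRotate ▸ (finRotate n).surjective
  calc
    Matrix.trace (centeredProd fun i => cactusMonomialEval a (ℓv i) (d i) (kv i) (g i))
      = Matrix.trace (centeredProd fun i => (t i).eval a) := by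
        simp only [t, cactusMonomial.eval_eq a _ _ _ _ (hg _)]
    _ = ∑ φ : BigV n d g → Fin N with glueSetoid n d g ≤ Setoid.ker φ,
          if ∀ i, φ (outVtx n d g i) ≠ φ (inVtx n d g i) then
            ∏ i, (t i).weight a fun v => φ ⟨i, v⟩ else 0 := by
        let _ : DecidableEq (Σ i, (t i).V) := fun _ _ => Classical.propDecidable _
        rw [trace_centeredProd_eval a hn, ← Finset.sum_filter, Finset.filter_filter]
        simp only [glueSetoid_le_ker_iff]
        rfl
    _ = ∑ χ : (bigTG n ℓv d kv g N A).V → Fin N,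
          if ∀ i, ¬ Setoid.ker χ (vCls n d g (nxt i)) (vCls n d g i) then
            (bigTG n ℓv d kv g N A).weight ω χ else 0 := by
        let _ : DecidableEq (Quotient (glueSetoid n d g)) := fun _ _ => Classical.propDecidable _
        refine (sum_comp_quotient_mk _ _).symm.trans <| Fintype.sum_congr _ _ fun χ =>
          if_congr ?_ (weight_bigTG ℓv kv A ω χ).symm rfl
        refine nxt_surjective.forall.trans (forall_congr' fun i => ?_)
        rw [vCls_eq_mk_outVtx i]
        exact ne_comm
    _ = _ := (Finset.sum_filter _ _).symm

lemma exists_bigTG_lab_eq (e : (bigTG n ℓv d kv g N A).E) :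
    ∃ ℓ k, (bigTG n ℓv d kv g N A).lab e = A ℓ k := by
  rcases e with e | e <;> exact ⟨_, _, rfl⟩

end Glue

theorem expected_trace_centered_eq_sum_injective_traces_general {Ω : Type} [MeasurableSpace Ω]
    (μ : Measure Ω) [IsFiniteMeasure μ] {K : Type} {L N : ℕ}
    (A : Fin L → K → Ω → Matrix (Fin N) (Fin N) ℂ) (hmeas : ∀ ℓ k, EntriesMeasurable (A ℓ k))
    (hbdd : ∀ ℓ k, EntriesBounded μ (A ℓ k)) {n : ℕ} (hn : n ≠ 0) (ℓv : Fin n → Fin L)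
    (d : Fin n → ℕ) (kv : Fin n → ℕ → K) (g : Fin n → ℕ → GraphMonomial L K)
    (hroot : ∀ i, ∀ j ≤ d i, (g i j).vin = (g i j).vout)
    (hconn : ∀ i, ∀ j ≤ d i, IsConnectedGraph (g i j).src (g i j).tgt) :
    (∫ ω, (N : ℂ)⁻¹ * Matrix.trace (centeredProd fun i =>
        cactusMonomialEval (fun ℓ k => A ℓ k ω) (ℓv i) (d i) (kv i) (g i)) ∂μ) =
      ∑ᶠ π : Setoid (Quotient (glueSetoid n d g)),
        if ∀ i, ¬ π (vCls n d g (nxt i)) (vCls n d g i) then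
          ((bigTG n ℓv d kv g N A).quot π).tau0 μ
        else 0 := by
  let T := bigTG n ℓv d kv g N A
  have : Nonempty T.V := ⟨vCls n d g ⟨0, Nat.pos_of_ne_zero hn⟩⟩
  have lab_measurable (e : T.E) : EntriesMeasurable (T.lab e) := by
    obtain ⟨ℓ, k, he⟩ := exists_bigTG_lab_eq ℓv kv A e
    exact he ▸ hmeas ℓ k
  have lab_bounded (e : T.E) : EntriesBounded μ (T.lab e) := by
    obtain ⟨ℓ, k, he⟩ := exists_bigTG_lab_eq ℓv kv A e
    exact he ▸ hbdd ℓ k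
  simp only [trace_centeredProd_eq_sum_bigTG ℓv kv A hn hroot]
  exact (TestGraph.finsum_tau0_quot (isConnectedGraph_bigTG ℓv kv A hconn) lab_measurable
    lab_bounded fun π => ∀ i, ¬ π (vCls n d g (nxt i)) (vCls n d g i)).symm

/-- Lemma 4.5.
The expected normalized trace of the centered product
`(M_{N,1} - ΔM_{N,1}) ⋯ (M_{N,n} - ΔM_{N,n})` equals the sum of the injective
trace observables `τ⁰_N[T^π]` over all partitions `π` of the vertices of the
test graph `T` that separate `v_i` from `v_{i-1}` for every `i`. -/
theorem expected_trace_centered_eq_sum_injective_traces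
    {Ω : Type} [MeasurableSpace Ω] (μ : Measure Ω) [IsProbabilityMeasure μ]
    {K : Type} [Nonempty K] [Finite K] {L : ℕ} (hL : 1 ≤ L)
    (A : (N : ℕ) → Fin L → K → Ω → Matrix (Fin N) (Fin N) ℂ)
    (hmeas : ∀ N ℓ k, EntriesMeasurable (A N ℓ k))
    (hbdd : ∀ N ℓ k, EntriesBounded μ (A N ℓ k))
    (n : ℕ) (hn : 2 ≤ n) (ℓv : Fin n → Fin L)
    (hadj : ∀ (i : ℕ) (h1 : i + 1 < n),
      ℓv ⟨i, Nat.lt_of_succ_lt h1⟩ ≠ ℓv ⟨i + 1, h1⟩)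
    (d : Fin n → ℕ) (hd : ∀ i, 1 ≤ d i) (kv : Fin n → ℕ → K)
    (g : Fin n → ℕ → GraphMonomial L K)
    (hg : ∀ (i : Fin n) (j : ℕ), j ≤ d i → (g i j).IsCactusType)
    (N : ℕ) :
    (∫ ω, (N : ℂ)⁻¹ *
        Matrix.trace (centeredProd fun i : Fin n =>
          cactusMonomialEval (fun ℓ k => A N ℓ k ω) (ℓv i) (d i) (kv i) (g i)) ∂μ) =
      ∑ᶠ π : Setoid (Quotient (glueSetoid n d g)),
        if ∀ i : Fin n, ¬ π.r (vCls n d g (nxt i)) (vCls n d g i) then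
          TestGraph.tau0 (TestGraph.quot (bigTG n ℓv d kv g N (A N)) π) μ
        else 0 :=
  expected_trace_centered_eq_sum_injective_traces_general μ (A N) (hmeas N) (hbdd N)
    (Nat.ne_zero_of_lt hn) ℓv d kv g (fun i j hj => (hg i j hj).1) fun i j hj => (hg i j hj).2.1
end
end
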